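/- arXiv:1906.11073 — 5 statements merged into one kernel-verified Lean document; each statement's English description precedes it below -/
import Mathlib

section
/- Theorem 1.5. Let α ∈ (0,1), d₁, d₂ > 0 and c₁, c₂ ∈ ℝ. Let u₀, v₀ : ℝ → ℝ be bounded, α-Hölder continuous functions with u₀(x) ≥ 0 and v₀(x) ≥ 0 for all x ∈ ℝ, not both identically zero. Then for every classical solution (u,v) on ℝ × [0,T), T ∈ (0,∞], of the system u_t = d₁ u_xx + c₁ u_x + v², v_t = d₂ v_xx + c₂ v_x + u² with initial data (u₀, v₀), there exists a constant c > 0 such that for all t ∈ [0,T): sup_{x∈ℝ}(|u(x,t)| + |v(x,t)|) ≥ c·log(1+t) and ∫_ℝ (|u(x,t)| + |v(x,t)|) dx ≥ c·t. -/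
open MeasureTheory Set

noncomputable section

/-- `f` is `α`-Hölder continuous. -/
def HolderCont (α : ℝ) (f : ℝ → ℝ) : Prop :=
  ∃ C : ℝ, ∀ x y : ℝ, |f x - f y| ≤ C * |x - y| ^ α

/-- `h : ℝ² → ℝ` is `C^{2,α}`: twice continuously differentiable with `α`-Hölder
continuous second-order derivatives. -/
def IsC2Holder (α : ℝ) (h : ℝ × ℝ → ℝ) : Prop :=
  ContDiff ℝ 2 h ∧
    ∃ C : ℝ, ∀ x y : ℝ × ℝ,
      ‖iteratedFDeriv ℝ 2 h x - iteratedFDeriv ℝ 2 h y‖ ≤ C * ‖x - y‖ ^ α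

/-- A classical solution of the reaction-diffusion-advection system (GRD)
`u_t = d₁ u_xx + c₁ u_x + f₁(u,v) + ∂_x(g₁(u,v))`,
`v_t = d₂ v_xx + c₂ v_x + f₂(u,v) + ∂_x(g₂(u,v))`
on `ℝ × [0,T)` with initial data `(u₀, v₀)`: jointly continuous, bounded in `x` on
each compact time interval, once continuously differentiable in `t` and twice
continuously differentiable in `x` on `ℝ × (0,T)`, satisfying both equations
pointwise there, and attaining the initial data at `t = 0`. -/
def IsClassicalSolution (d₁ d₂ c₁ c₂ : ℝ) (f₁ f₂ g₁ g₂ : ℝ × ℝ → ℝ)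
    (T : ENNReal) (u₀ v₀ : ℝ → ℝ) (u v : ℝ → ℝ → ℝ) : Prop :=
  (∀ x : ℝ, u x 0 = u₀ x) ∧ (∀ x : ℝ, v x 0 = v₀ x) ∧
  ContinuousOn (fun p : ℝ × ℝ => (u p.1 p.2, v p.1 p.2))
    {p : ℝ × ℝ | 0 ≤ p.2 ∧ ENNReal.ofReal p.2 < T} ∧
  (∀ t₁ : ℝ, 0 ≤ t₁ → ENNReal.ofReal t₁ < T →
    ∃ K : ℝ, ∀ x t : ℝ, 0 ≤ t → t ≤ t₁ → |u x t| + |v x t| ≤ K) ∧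
  ∃ ut vt ux vx uxx vxx gx hx : ℝ → ℝ → ℝ,
    (∀ x t : ℝ, 0 < t → ENNReal.ofReal t < T →
      HasDerivAt (fun τ => u x τ) (ut x t) t ∧
      HasDerivAt (fun ξ => u ξ t) (ux x t) x ∧
      HasDerivAt (fun ξ => ux ξ t) (uxx x t) x ∧
      HasDerivAt (fun ξ => g₁ (u ξ t, v ξ t)) (gx x t) x ∧
      HasDerivAt (fun τ => v x τ) (vt x t) t ∧
      HasDerivAt (fun ξ => v ξ t) (vx x t) x ∧
      HasDerivAt (fun ξ => vx ξ t) (vxx x t) x ∧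
      HasDerivAt (fun ξ => g₂ (u ξ t, v ξ t)) (hx x t) x ∧
      ut x t = d₁ * uxx x t + c₁ * ux x t + f₁ (u x t, v x t) + gx x t ∧
      vt x t = d₂ * vxx x t + c₂ * vx x t + f₂ (u x t, v x t) + hx x t) ∧
    ContinuousOn (fun p : ℝ × ℝ =>
        (ut p.1 p.2, ux p.1 p.2, uxx p.1 p.2, vt p.1 p.2, vx p.1 p.2, vxx p.1 p.2))
      {p : ℝ × ℝ | 0 < p.2 ∧ ENNReal.ofReal p.2 < T}

/-!
Translating each component with its own drift removes the advection terms, so that `u` and `v`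
become nonnegative supersolutions of heat equations, each driven by the square of the other, in
frames that separate with velocity `β = c₁ - c₂`. Suppose `v₀` is positive somewhere. A difference
of two heat kernels is negative away from the origin and hence a subsolution lying below `v` at
time `0`; it gives `v ≳ t^(-1/2)` for `y² ≤ d₂ t` in the frame of `v`. So `u` feels a source of
size `1/t` there.

If `β = 0`, this source acts on the same parabolic region throughout `[t/2, t]`, so `u ≳ 1` there,
and then the source `u²` makes `v ≳ t`.

If `β ≠ 0`, the diffusive region of `v` sweeps across the frame of `u` and acts on a given point for
a time of order `√t` only. This still leaves `u ≳ t^(-1/2)` behind it, which in the frame of `v` is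
a source `u² ≳ 1/s` on the band `√s ≤ w ≤ s/2` of points `-β w`. Near `w = 2√t` that source acts
during `[6√t, t]`, and integrating `1/s` gives `v ≳ log t`; near `w = 3t/16` it acts during
`[t/2, t]`, and gives `v ≳ 1` on an interval of length of order `t`.
-/

section

open Filter Real Topology Function

/-! ### The minimum principle -/

section Minimum

variable {f : ℝ → ℝ}

theorem second_deriv_nonneg_of_isLocalMin {f' : ℝ → ℝ} {f'' x : ℝ}
    (hf : ∀ᶠ y in 𝓝 x, HasDerivAt f (f' y) y) (hf' : HasDerivAt f' f'' x) (hmin : IsLocalMin f x) :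
    0 ≤ f'' := by
  by_contra! hneg
  have hderiv : deriv f =ᶠ[𝓝 x] f' := hf.mono fun y hy ↦ hy.deriv
  have hsecond : deriv (deriv f) x = f'' := by rw [hderiv.deriv_eq, hf'.deriv]
  have hmax : IsLocalMax f x :=
    isLocalMax_of_deriv_deriv_neg (hsecond ▸ hneg) hmin.deriv_eq_zero hf.self_of_nhds.continuousAt
  have hconst : f =ᶠ[𝓝 x] fun _ ↦ f x := by
    filter_upwards [hmin, hmax] with y hy hy' using le_antisymm hy' hy
  have hzero : f'' = 0 := by simpa [hsecond] using hconst.deriv.deriv_eq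
  exact hneg.ne hzero

theorem hasDerivAt_nonpos_of_forall_Icc_le {f' a t : ℝ} (hat : a < t) (hf : HasDerivAt f f' t)
    (hmin : ∀ s ∈ Icc a t, f t ≤ f s) : f' ≤ 0 := by
  have hslope := (hasDerivWithinAt_iff_tendsto_slope' (s := Iio t) (by simp)).1 hf.hasDerivWithinAt
  refine le_of_tendsto hslope ?_
  filter_upwards [Ioo_mem_nhdsLT hat] with s hs
  rw [slope_def_field]
  exact div_nonpos_of_nonneg_of_nonpos (sub_nonneg.2 (hmin s ⟨hs.1.le, hs.2.le⟩))
    (sub_nonpos.2 hs.2.le)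

end Minimum

/-- `F_t ≥ d F_yy + h` on the set `Ω` of points `(y, t)`, in the classical sense: the derivatives
`F_t`, `F_y` and `F_yy` exist at every point of `Ω`. -/
def IsHeatSupersolutionOn (d : ℝ) (F h : ℝ → ℝ → ℝ) (Ω : Set (ℝ × ℝ)) : Prop :=
  ∃ Ft Fy Fyy : ℝ → ℝ → ℝ, ∀ y t, (y, t) ∈ Ω →
    HasDerivAt (fun τ ↦ F y τ) (Ft y t) t ∧ HasDerivAt (fun ξ ↦ F ξ t) (Fy y t) y ∧
    HasDerivAt (fun ξ ↦ Fy ξ t) (Fyy y t) y ∧ d * Fyy y t + h y t ≤ Ft y t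

namespace IsHeatSupersolutionOn

variable {d : ℝ} {F G h k : ℝ → ℝ → ℝ} {Ω Ω' : Set (ℝ × ℝ)}

theorem mono (hF : IsHeatSupersolutionOn d F h Ω) (hΩ : Ω' ⊆ Ω) : IsHeatSupersolutionOn d F h Ω' :=
  let ⟨Ft, Fy, Fyy, hD⟩ := hF
  ⟨Ft, Fy, Fyy, fun y t hyt ↦ hD y t (hΩ hyt)⟩

theorem add (hF : IsHeatSupersolutionOn d F h Ω) (hG : IsHeatSupersolutionOn d G k Ω) :
    IsHeatSupersolutionOn d (fun y t ↦ F y t + G y t) (fun y t ↦ h y t + k y t) Ω := by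
  obtain ⟨Ft, Fy, Fyy, hF⟩ := hF
  obtain ⟨Gt, Gy, Gyy, hG⟩ := hG
  refine ⟨fun y t ↦ Ft y t + Gt y t, fun y t ↦ Fy y t + Gy y t, fun y t ↦ Fyy y t + Gyy y t,
    fun y t hyt ↦ ?_⟩
  obtain ⟨hFt, hFy, hFyy, hFle⟩ := hF y t hyt
  obtain ⟨hGt, hGy, hGyy, hGle⟩ := hG y t hyt
  exact ⟨hFt.add hGt, hFy.add hGy, hFyy.add hGyy, by linarith⟩

theorem time_linear (d η s : ℝ) (Ω : Set (ℝ × ℝ)) :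
    IsHeatSupersolutionOn d (fun _ t ↦ η * (t - s)) (fun _ _ ↦ η) Ω :=
  ⟨fun _ _ ↦ η, fun _ _ ↦ 0, fun _ _ ↦ 0, fun y t _ ↦
    ⟨by simpa using ((hasDerivAt_id' t).sub_const s).const_mul η, hasDerivAt_const y _,
      hasDerivAt_const y _, by simp⟩⟩

theorem quadratic (d ε s : ℝ) (Ω : Set (ℝ × ℝ)) :
    IsHeatSupersolutionOn d (fun y t ↦ ε * (y ^ 2 + 2 * d * (t - s))) (fun _ _ ↦ 0) Ω := by
  refine ⟨fun _ _ ↦ ε * (2 * d), fun y _ ↦ ε * (2 * y), fun _ _ ↦ ε * 2,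
    fun y t _ ↦ ⟨?_, ?_, ?_, by linarith⟩⟩
  · simpa using ((((hasDerivAt_id' t).sub_const s).const_mul (2 * d)).const_add (y ^ 2)).const_mul ε
  · simpa using ((hasDerivAt_pow 2 y).add_const (2 * d * (t - s))).const_mul ε
  · simpa using ((hasDerivAt_id' y).const_mul 2).const_mul ε

section Rectangle

variable {a b s₀ t₀ : ℝ}

theorem source_nonpos_of_isMinOn (hd : 0 ≤ d)
    (hF : IsHeatSupersolutionOn d F h (Ioo a b ×ˢ Ioc s₀ t₀)) {y t : ℝ} (hy : y ∈ Ioo a b)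
    (ht : t ∈ Ioc s₀ t₀) (hmin : IsMinOn (uncurry F) (Icc a b ×ˢ Icc s₀ t₀) (y, t)) :
    h y t ≤ 0 := by
  obtain ⟨Ft, Fy, Fyy, hD⟩ := hF
  obtain ⟨hFt, -, hFyy, hle⟩ := hD y t ⟨hy, ht⟩
  have hmin_time : ∀ s ∈ Icc s₀ t, F y t ≤ F y s := fun s hs ↦
    hmin (show (y, s) ∈ _ from ⟨Ioo_subset_Icc_self hy, hs.1, hs.2.trans ht.2⟩)
  have hmin_space : IsLocalMin (fun ξ ↦ F ξ t) y := by
    filter_upwards [Ioo_mem_nhds hy.1 hy.2] with ξ hξ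
    exact hmin (show (ξ, t) ∈ _ from ⟨Ioo_subset_Icc_self hξ, Ioc_subset_Icc_self ht⟩)
  have hderiv_space : ∀ᶠ ξ in 𝓝 y, HasDerivAt (fun ξ ↦ F ξ t) (Fy ξ t) ξ := by
    filter_upwards [Ioo_mem_nhds hy.1 hy.2] with ξ hξ using (hD ξ t ⟨hξ, ht⟩).2.1
  have hFt_nonpos : Ft y t ≤ 0 := hasDerivAt_nonpos_of_forall_Icc_le ht.1 hFt hmin_time
  have hFyy_nonneg : 0 ≤ Fyy y t := second_deriv_nonneg_of_isLocalMin hderiv_space hFyy hmin_space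
  linarith [mul_nonneg hd hFyy_nonneg]

theorem nonneg_on_rectangle_of_source_pos (hd : 0 ≤ d)
    (hF : IsHeatSupersolutionOn d F h (Ioo a b ×ˢ Ioc s₀ t₀))
    (hcont : ContinuousOn (uncurry F) (Icc a b ×ˢ Icc s₀ t₀))
    (hh : ∀ y ∈ Ioo a b, ∀ t ∈ Ioc s₀ t₀, 0 < h y t) (hinit : ∀ y ∈ Icc a b, 0 ≤ F y s₀)
    (hleft : ∀ t ∈ Icc s₀ t₀, 0 ≤ F a t) (hright : ∀ t ∈ Icc s₀ t₀, 0 ≤ F b t) :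
    ∀ y ∈ Icc a b, ∀ t ∈ Icc s₀ t₀, 0 ≤ F y t := by
  intro y hy t ht
  obtain ⟨⟨p, q⟩, ⟨hp, hq⟩, hmin⟩ := (isCompact_Icc.prod isCompact_Icc).exists_isMinOn
    ⟨(y, t), hy, ht⟩ hcont
  dsimp only at hp hq
  suffices 0 ≤ F p q from this.trans (hmin (show (y, t) ∈ _ from ⟨hy, ht⟩))
  rcases hq.1.eq_or_lt with rfl | hq_lt
  · exact hinit p hp
  rcases hp.1.eq_or_lt with rfl | hp_left
  · exact hleft q hq
  rcases hp.2.eq_or_lt with rfl | hp_right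
  · exact hright q hq
  · exact absurd (hF.source_nonpos_of_isMinOn hd ⟨hp_left, hp_right⟩ ⟨hq_lt, hq.2⟩ hmin)
      (hh p ⟨hp_left, hp_right⟩ q ⟨hq_lt, hq.2⟩).not_ge

theorem nonneg_on_rectangle (hd : 0 ≤ d)
    (hF : IsHeatSupersolutionOn d F h (Ioo a b ×ˢ Ioc s₀ t₀))
    (hcont : ContinuousOn (uncurry F) (Icc a b ×ˢ Icc s₀ t₀))
    (hh : ∀ y ∈ Ioo a b, ∀ t ∈ Ioc s₀ t₀, 0 ≤ h y t) (hinit : ∀ y ∈ Icc a b, 0 ≤ F y s₀)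
    (hleft : ∀ t ∈ Icc s₀ t₀, 0 ≤ F a t) (hright : ∀ t ∈ Icc s₀ t₀, 0 ≤ F b t) :
    ∀ y ∈ Icc a b, ∀ t ∈ Icc s₀ t₀, 0 ≤ F y t := by
  intro y hy t ht
  have hperturbed : ∀ η > 0, 0 ≤ F y t + η * (t - s₀) := by
    intro η hη
    have hdrift : ∀ s ∈ Icc s₀ t₀, 0 ≤ η * (s - s₀) := fun s hs ↦
      mul_nonneg hη.le (sub_nonneg.2 hs.1)
    refine (hF.add (time_linear d η s₀ _)).nonneg_on_rectangle_of_source_pos hd ?_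
      (fun z hz s hs ↦ add_pos_of_nonneg_of_pos (hh z hz s hs) hη)
      (fun z hz ↦ by simpa using hinit z hz)
      (fun s hs ↦ add_nonneg (hleft s hs) (hdrift s hs))
      (fun s hs ↦ add_nonneg (hright s hs) (hdrift s hs)) y hy t ht
    exact hcont.add (by fun_prop)
  have hlim : Tendsto (fun η : ℝ ↦ F y t + η * (t - s₀)) (𝓝[>] 0) (𝓝 (F y t + 0 * (t - s₀))) :=
    Continuous.continuousWithinAt (by fun_prop)
  have hlim_nonneg : 0 ≤ F y t + 0 * (t - s₀) :=
    ge_of_tendsto hlim (eventually_mem_nhdsWithin.mono hperturbed)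
  simpa using hlim_nonneg

end Rectangle

/-- The barrier `K R⁻² (y² + 2d(t - s₀))` absorbs the lower bound `-K` at `|y| = R` and vanishes as
`R → ∞`. -/
theorem nonneg_on_line (hd : 0 ≤ d) {s₀ t₀ K : ℝ}
    (hF : IsHeatSupersolutionOn d F h (univ ×ˢ Ioc s₀ t₀))
    (hcont : ContinuousOn (uncurry F) (univ ×ˢ Icc s₀ t₀))
    (hh : ∀ y, ∀ t ∈ Ioc s₀ t₀, 0 ≤ h y t) (hinit : ∀ y, 0 ≤ F y s₀)
    (hbdd : ∀ y, ∀ t ∈ Icc s₀ t₀, -K ≤ F y t) :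
    ∀ y, ∀ t ∈ Icc s₀ t₀, 0 ≤ F y t := by
  intro y t ht
  have hbarrier : ∀ R > 0, |y| ≤ R → 0 ≤ F y t + |K| / R ^ 2 * (y ^ 2 + 2 * d * (t - s₀)) := by
    intro R hR hyR
    have hboundary : ∀ z, z ^ 2 = R ^ 2 → ∀ s ∈ Icc s₀ t₀,
        0 ≤ F z s + |K| / R ^ 2 * (z ^ 2 + 2 * d * (s - s₀)) := by
      intro z hz s hs
      have htime : 0 ≤ |K| / R ^ 2 * (2 * d * (s - s₀)) := by
        have := sub_nonneg.2 hs.1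
        positivity
      have hspace : |K| / R ^ 2 * z ^ 2 = |K| := by rw [hz]; field_simp
      linarith [hbdd z s hs, le_abs_self K]
    refine ((hF.mono (prod_mono_left (subset_univ _))).add
      (quadratic d (|K| / R ^ 2) s₀ _)).nonneg_on_rectangle hd ?_ ?_ ?_
      (hboundary (-R) (neg_sq R)) (hboundary R rfl) y (abs_le.1 hyR) t ht
    · exact (hcont.mono (prod_mono_left (subset_univ _))).add (by fun_prop)
    · exact fun z _ s hs ↦ by simpa using hh z s hs
    · exact fun z _ ↦ add_nonneg (hinit z) (by rw [sub_self, mul_zero, add_zero]; positivity)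
  have hlim : Tendsto (fun R : ℝ ↦ F y t + |K| / R ^ 2 * (y ^ 2 + 2 * d * (t - s₀))) atTop
      (𝓝 (F y t + 0 * (y ^ 2 + 2 * d * (t - s₀)))) :=
    ((tendsto_const_nhds.div_atTop (tendsto_pow_atTop two_ne_zero)).mul_const _).const_add _
  have hlim_nonneg := ge_of_tendsto hlim <| by
    filter_upwards [eventually_ge_atTop |y|, eventually_gt_atTop 0] with R hyR hR
      using hbarrier R hR hyR
  simpa using hlim_nonneg

end IsHeatSupersolutionOn

/-! ### Explicit solutions of the heat equation -/

/-- `F_t = d F_yy` on the set `Ω` of points `(y, t)`, in the classical sense. -/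
def IsHeatSolutionOn (d : ℝ) (F : ℝ → ℝ → ℝ) (Ω : Set (ℝ × ℝ)) : Prop :=
  ∃ Fy Fyy : ℝ → ℝ → ℝ, ∀ y t, (y, t) ∈ Ω →
    HasDerivAt (fun τ ↦ F y τ) (d * Fyy y t) t ∧ HasDerivAt (fun ξ ↦ F ξ t) (Fy y t) y ∧
    HasDerivAt (fun ξ ↦ Fy ξ t) (Fyy y t) y

theorem IsHeatSolutionOn.time_mul_translate {d : ℝ} {F : ℝ → ℝ → ℝ} {Ω Ω' : Set (ℝ × ℝ)}
    (hF : IsHeatSolutionOn d F Ω) {y₀ s₀ : ℝ} {g g' : ℝ → ℝ}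
    (hΩ : ∀ y t, (y, t) ∈ Ω' → (y - y₀, t - s₀) ∈ Ω)
    (hg : ∀ y t, (y, t) ∈ Ω' → HasDerivAt g (g' t) t) :
    IsHeatSupersolutionOn d (fun y t ↦ g t * F (y - y₀) (t - s₀))
      (fun y t ↦ g' t * F (y - y₀) (t - s₀)) Ω' := by
  obtain ⟨Fy, Fyy, hD⟩ := hF
  refine ⟨fun y t ↦ g' t * F (y - y₀) (t - s₀) + g t * (d * Fyy (y - y₀) (t - s₀)),
    fun y t ↦ g t * Fy (y - y₀) (t - s₀), fun y t ↦ g t * Fyy (y - y₀) (t - s₀), fun y t hyt ↦ ?_⟩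
  obtain ⟨hFt, hFy, hFyy⟩ := hD _ _ (hΩ y t hyt)
  exact ⟨(hg y t hyt).mul (hFt.comp_sub_const t s₀), (hFy.comp_sub_const y y₀).const_mul (g t),
    (hFyy.comp_sub_const y y₀).const_mul (g t), by linarith⟩

section HeatMode

/-- The lowest Dirichlet mode of the heat equation with diffusivity `d` on `[-R, R]`, that is, the
solution with initial value `cos (πy / 2R)` vanishing at `y = ±R`. -/
def heatMode (d R y s : ℝ) : ℝ := exp (-(d * (π / (2 * R)) ^ 2 * s)) * cos (π / (2 * R) * y)

variable {d R y s : ℝ}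

theorem isHeatSolutionOn_heatMode (d R : ℝ) : IsHeatSolutionOn d (heatMode d R) univ := by
  set μ := π / (2 * R)
  refine ⟨fun y s ↦ exp (-(d * μ ^ 2 * s)) * (-sin (μ * y) * μ),
    fun y s ↦ exp (-(d * μ ^ 2 * s)) * (-(cos (μ * y) * μ) * μ), fun y s _ ↦ ⟨?_, ?_, ?_⟩⟩
  · refine (((hasDerivAt_id' s).const_mul (d * μ ^ 2)).fun_neg.exp.mul_const
      (cos (μ * y))).congr_deriv ?_
    ring
  · simpa [heatMode] using
      ((hasDerivAt_id' y).const_mul μ).cos.const_mul (exp (-(d * μ ^ 2 * s)))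
  · simpa using (((hasDerivAt_id' y).const_mul μ).sin.fun_neg.mul_const μ).const_mul
      (exp (-(d * μ ^ 2 * s)))

theorem continuous_heatMode (d R : ℝ) : Continuous (uncurry (heatMode d R)) := by
  unfold heatMode; fun_prop

theorem heatMode_le_one (hd : 0 ≤ d) (hs : 0 ≤ s) : heatMode d R y s ≤ 1 :=
  (mul_le_of_le_one_right (exp_nonneg _) (cos_le_one _)).trans
    (exp_le_one_iff.2 (neg_nonpos.2 (by positivity)))

theorem heatMode_eq_zero (hR : R ≠ 0) (hy : |y| = |R|) : heatMode d R y s = 0 := by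
  have hcos : cos (π / (2 * R) * R) = 0 := by
    rw [← cos_pi_div_two]
    congr 1
    field_simp
  rcases abs_eq_abs.1 hy with rfl | rfl <;> simp [heatMode, hcos]

theorem half_exp_neg_le_heatMode {L : ℝ} (hR : 0 < R) (hy : |y| ≤ R / 2)
    (hs : d * (π / (2 * R)) ^ 2 * s ≤ L) : exp (-L) / 2 ≤ heatMode d R y s := by
  have hcos : 1 / 2 ≤ cos (π / (2 * R) * y) := by
    have hangle : |π / (2 * R) * y| ≤ π / 4 := by
      rw [abs_mul, abs_of_pos (by positivity)]
      calc π / (2 * R) * |y| ≤ π / (2 * R) * (R / 2) := by gcongr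
        _ = π / 4 := by field_simp; norm_num
    rw [← cos_abs, ← cos_pi_div_three]
    exact cos_le_cos_of_nonneg_of_le_pi (abs_nonneg _) (by linarith [pi_pos])
      (by linarith [pi_pos])
  calc exp (-L) / 2 = exp (-L) * (1 / 2) := by ring
    _ ≤ heatMode d R y s := by unfold heatMode; gcongr

end HeatMode

section HeatKernel

/-- The heat kernel with diffusivity `d`, without the factor `(4πd)^(-1/2)`. -/
def heatKernel (d y s : ℝ) : ℝ := (√s)⁻¹ * exp (-(y ^ 2 / (4 * d * s)))

variable {d y s : ℝ}

theorem hasDerivAt_heatKernel_space (hd : d ≠ 0) (hs : s ≠ 0) :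
    HasDerivAt (fun ξ ↦ heatKernel d ξ s) (heatKernel d y s * (-(y / (2 * d * s)))) y := by
  have hexponent : HasDerivAt (fun ξ : ℝ ↦ -(ξ ^ 2 / (4 * d * s))) (-(y / (2 * d * s))) y := by
    refine ((hasDerivAt_pow 2 y).div_const (4 * d * s)).neg.congr_deriv ?_
    field_simp
    ring
  exact (hexponent.exp.const_mul (√s)⁻¹).congr_deriv (mul_assoc _ _ _).symm

theorem hasDerivAt_heatKernel_time (hd : d ≠ 0) (hs : 0 < s) :
    HasDerivAt (fun τ ↦ heatKernel d y τ)
      (heatKernel d y s * (y ^ 2 / (4 * d * s ^ 2) - 1 / (2 * s))) s := by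
  have hexponent : HasDerivAt (fun τ ↦ -(y ^ 2 / (4 * d * τ))) (y ^ 2 / (4 * d * s ^ 2)) s := by
    have hden : HasDerivAt (fun τ ↦ 4 * d * τ) (4 * d) s := by
      simpa using (hasDerivAt_id' s).const_mul (4 * d)
    refine ((hasDerivAt_const s (y ^ 2)).fun_div hden (by positivity)).neg.congr_deriv ?_
    field_simp
    ring
  have hprefactor : HasDerivAt (fun τ ↦ (√τ)⁻¹) (-((√s)⁻¹ / (2 * s))) s := by
    refine ((hasDerivAt_sqrt hs.ne').fun_inv (sqrt_pos.2 hs).ne').congr_deriv ?_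
    rw [sq_sqrt hs.le]
    field_simp
  refine (hprefactor.mul hexponent.exp).congr_deriv ?_
  unfold heatKernel
  ring

theorem isHeatSolutionOn_heatKernel (hd : d ≠ 0) :
    IsHeatSolutionOn d (heatKernel d) (univ ×ˢ Ioi 0) := by
  refine ⟨fun y s ↦ heatKernel d y s * (-(y / (2 * d * s))),
    fun y s ↦ heatKernel d y s * (y ^ 2 / (4 * d * s ^ 2) - 1 / (2 * s)) / d,
    fun y s ⟨_, (hs : 0 < s)⟩ ↦ ⟨?_, hasDerivAt_heatKernel_space hd hs.ne', ?_⟩⟩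
  · rw [mul_div_cancel₀ _ hd]
    exact hasDerivAt_heatKernel_time hd hs
  · refine ((hasDerivAt_heatKernel_space hd hs.ne').mul
      ((hasDerivAt_id' y).div_const (2 * d * s)).fun_neg).congr_deriv ?_
    field_simp
    ring

theorem continuousOn_heatKernel (hd : d ≠ 0) :
    ContinuousOn (uncurry (heatKernel d)) (univ ×ˢ Ioi 0) := by
  have hpos : ∀ p ∈ (univ : Set ℝ) ×ˢ Ioi (0 : ℝ), 0 < p.2 := fun p hp ↦ hp.2
  refine ContinuousOn.mul (ContinuousOn.inv₀ (by fun_prop) fun p hp ↦ (sqrt_pos.2 (hpos p hp)).ne')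
    (ContinuousOn.div (by fun_prop) (by fun_prop) fun p hp ↦ ?_).neg.rexp
  have := (hpos p hp).ne'
  positivity

theorem isHeatSupersolutionOn_mul_heatKernel (hd : d ≠ 0) (b : ℝ) {τ : ℝ} (hτ : 0 < τ)
    (t₀ : ℝ) :
    IsHeatSupersolutionOn d (fun y t ↦ b * heatKernel d y (t + τ)) (fun _ _ ↦ 0)
      (univ ×ˢ Ioc 0 t₀) := by
  simpa using (isHeatSolutionOn_heatKernel hd).time_mul_translate (y₀ := 0) (s₀ := -τ)
    (Ω' := univ ×ˢ Ioc 0 t₀) (g := fun _ ↦ b) (g' := fun _ ↦ 0)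
    (fun y t ht ↦ ⟨mem_univ _, show 0 < t - -τ by linarith [ht.2.1]⟩)
    fun y t _ ↦ hasDerivAt_const t b

theorem continuousOn_heatKernel_add (hd : d ≠ 0) {τ : ℝ} (hτ : 0 < τ) (t₀ : ℝ) :
    ContinuousOn (fun p : ℝ × ℝ ↦ heatKernel d p.1 (p.2 + τ)) (univ ×ˢ Icc 0 t₀) :=
  (continuousOn_heatKernel hd).comp (g := uncurry (heatKernel d))
    (f := fun p : ℝ × ℝ ↦ (p.1, p.2 + τ)) (by fun_prop)
    fun _ hp ↦ ⟨mem_univ _, add_pos_of_nonneg_of_pos hp.2.1 hτ⟩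

theorem heatKernel_nonneg : 0 ≤ heatKernel d y s := by unfold heatKernel; positivity

theorem heatKernel_le (hd : 0 ≤ d) (hs : 0 ≤ s) : heatKernel d y s ≤ (√s)⁻¹ :=
  mul_le_of_le_one_right (by positivity) (exp_le_one_iff.2 (by simp only [neg_nonpos]; positivity))

theorem exists_heatKernel_le_half {r : ℝ} (hd : 0 < d) (hr : 0 < r) :
    ∃ θ ∈ Ioo (0 : ℝ) 1, ∀ y, r ≤ |y| → heatKernel d y θ ≤ heatKernel d y 1 / 2 := by
  set q := r ^ 2 / (4 * d) with hq
  have hq_pos : 0 < q := by positivity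
  have hdecay : ∀ᶠ X in atTop, X ^ (1 / 2 : ℝ) * exp (-q * X) < exp (-q) / 2 :=
    (tendsto_rpow_mul_exp_neg_mul_atTop_nhds_zero (1 / 2) q hq_pos).eventually_lt_const
      (by positivity)
  obtain ⟨X, hX, hX_one⟩ := (hdecay.and (eventually_gt_atTop 1)).exists
  have hX_pos : 0 < X := one_pos.trans hX_one
  rw [← sqrt_eq_rpow] at hX
  refine ⟨X⁻¹, ⟨by positivity, inv_lt_one_of_one_lt₀ hX_one⟩, fun y hy ↦ ?_⟩
  set p := (y ^ 2 - r ^ 2) / (4 * d) with hp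
  have hp_nonneg : 0 ≤ p := div_nonneg (by nlinarith [sq_abs y]) (by positivity)
  calc heatKernel d y X⁻¹ = √X * exp (-q * X) * exp (-(p * X)) := by
        rw [heatKernel, sqrt_inv, inv_inv, mul_assoc √X, ← exp_add, hp, hq]
        congr 2
        field_simp
        ring
    _ ≤ exp (-q) / 2 * exp (-p) := by
        gcongr
        exact le_mul_of_one_le_right hp_nonneg hX_one.le
    _ = heatKernel d y 1 / 2 := by
        rw [heatKernel, sqrt_one, inv_one, one_mul, div_mul_eq_mul_div, ← exp_add, hp, hq]
        congr 2
        field_simp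
        ring

theorem inv_sqrt_le_heatKernel_sub {θ t : ℝ} (hd : 0 < d) (hθ : θ ∈ Ioo (0 : ℝ) 1) (ht : 0 ≤ t)
    (hy : y ^ 2 ≤ d * t) :
    (√(t + 1))⁻¹ / 4 ≤ heatKernel d y (t + θ) - heatKernel d y (t + 1) / 2 := by
  have hθ_pos := hθ.1
  have hexponent : y ^ 2 / (4 * d * (t + θ)) ≤ 1 / 4 := by
    rw [div_le_iff₀ (by positivity)]
    nlinarith [mul_pos hd hθ_pos]
  have hexp : 3 / 4 ≤ exp (-(y ^ 2 / (4 * d * (t + θ)))) := by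
    linarith [add_one_le_exp (-(y ^ 2 / (4 * d * (t + θ))))]
  have hlower : (√(t + 1))⁻¹ * (3 / 4) ≤ heatKernel d y (t + θ) := by
    unfold heatKernel
    gcongr
    exact hθ.2.le
  linarith [heatKernel_le (y := y) hd.le (show 0 ≤ t + 1 by positivity)]

end HeatKernel

/-! ### Nonnegative supersolutions -/

theorem ofReal_lt_of_le {s t : ℝ} {T : ENNReal} (hst : s ≤ t) (ht : ENNReal.ofReal t < T) :
    ENNReal.ofReal s < T :=
  (ENNReal.ofReal_le_ofReal hst).trans_lt ht

theorem log_add_one_div_four_le {t : ℝ} (ht : 2401 ≤ t) :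
    log (t + 1) / 4 ≤ log (t + 1) - log (6 * √t + 1) := by
  have hseven : 6 * √t + 1 ≤ 7 * √(t + 1) := by
    have hone : 1 ≤ √(t + 1) := one_le_sqrt.2 (by linarith)
    linarith [sqrt_le_sqrt (show t ≤ t + 1 by linarith)]
  have hlog_seven : log 7 ≤ log (t + 1) / 4 := by
    have := log_le_log (by norm_num) (show (7 : ℝ) ^ 4 ≤ t + 1 by linarith)
    rw [log_pow] at this
    push_cast at this
    linarith
  have hlog : log (6 * √t + 1) ≤ log 7 + log (t + 1) / 2 := by
    rw [← log_sqrt (by linarith), ← log_mul (by norm_num) (by positivity)]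
    exact log_le_log (by positivity) hseven
  linarith

theorem exists_pos_le_one_mul_le {b : ℝ} (x : ℝ) (hb : 0 < b) : ∃ η > 0, η ≤ 1 ∧ x * η ≤ b := by
  refine ⟨min 1 (b / (|x| + 1)), by positivity, min_le_left _ _, ?_⟩
  calc x * min 1 (b / (|x| + 1)) ≤ (|x| + 1) * (b / (|x| + 1)) := by
        gcongr
        · linarith [le_abs_self x]
        · exact min_le_right _ _
    _ = b := by field_simp

/-- A nonnegative classical supersolution `U_t ≥ d U_yy + h` with source `h ≥ 0` on the strip
`ℝ × [0, T)`. -/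
structure IsNonnegHeatSupersolution (d : ℝ) (T : ENNReal) (U h : ℝ → ℝ → ℝ) : Prop where
  continuousOn : ContinuousOn (uncurry U) {p | 0 ≤ p.2 ∧ ENNReal.ofReal p.2 < T}
  isHeatSupersolutionOn : IsHeatSupersolutionOn d U h {p | 0 < p.2 ∧ ENNReal.ofReal p.2 < T}
  nonneg : ∀ y t, 0 ≤ t → ENNReal.ofReal t < T → 0 ≤ U y t
  source_nonneg : ∀ y t, 0 ≤ h y t

namespace IsNonnegHeatSupersolution

variable {d : ℝ} {T : ENNReal} {U h : ℝ → ℝ → ℝ}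

theorem of_bddBelow (hd : 0 ≤ d)
    (hcont : ContinuousOn (uncurry U) {p | 0 ≤ p.2 ∧ ENNReal.ofReal p.2 < T})
    (hU : IsHeatSupersolutionOn d U h {p | 0 < p.2 ∧ ENNReal.ofReal p.2 < T})
    (hh : ∀ y t, 0 ≤ h y t) (hinit : ∀ y, 0 ≤ U y 0)
    (hbdd : ∀ t₁, 0 ≤ t₁ → ENNReal.ofReal t₁ < T → ∃ K, ∀ y, ∀ t ∈ Icc 0 t₁, -K ≤ U y t) :
    IsNonnegHeatSupersolution d T U h := by
  refine ⟨hcont, hU, fun y t ht htT ↦ ?_, hh⟩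
  obtain ⟨K, hK⟩ := hbdd t ht htT
  refine (hU.mono ?_).nonneg_on_line hd (s₀ := 0) (t₀ := t)
    (hcont.mono ?_) (fun y s _ ↦ hh y s) hinit hK y t ⟨ht, le_rfl⟩
  · exact fun p hp ↦ ⟨hp.2.1, ofReal_lt_of_le hp.2.2 htT⟩
  · exact fun p hp ↦ ⟨hp.2.1, ofReal_lt_of_le hp.2.2 htT⟩

variable (hU : IsNonnegHeatSupersolution d T U h)
include hU

theorem mul_heatMode_le (hd : 0 ≤ d) {s₀ t₀ y₀ R : ℝ} (hs₀ : 0 ≤ s₀) (ht₀ : ENNReal.ofReal t₀ < T)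
    (hR : 0 < R) {g g' : ℝ → ℝ} (hg : ContinuousOn g (Icc s₀ t₀))
    (hg' : ∀ s ∈ Ioc s₀ t₀, HasDerivAt g (g' s) s ∧ 0 ≤ g' s)
    (hh : ∀ y s, |y - y₀| ≤ R → s ∈ Ioc s₀ t₀ → g' s ≤ h y s)
    (hinit : ∀ y, |y - y₀| ≤ R → g s₀ * heatMode d R (y - y₀) 0 ≤ U y s₀) :
    ∀ y t, |y - y₀| ≤ R → t ∈ Icc s₀ t₀ → g t * heatMode d R (y - y₀) (t - s₀) ≤ U y t := by
  intro y t hy ht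
  have hmem : ∀ z, z ∈ Icc (y₀ - R) (y₀ + R) ↔ |z - y₀| ≤ R := fun z ↦ by
    rw [abs_le, mem_Icc]; constructor <;> rintro ⟨h₁, h₂⟩ <;> constructor <;> linarith
  have hboundary : ∀ z, |z - y₀| = R → ∀ s ∈ Icc s₀ t₀,
      0 ≤ U z s + -g s * heatMode d R (z - y₀) (s - s₀) := fun z hz s hs ↦ by
    rw [heatMode_eq_zero hR.ne' (by rw [hz, abs_of_pos hR]), mul_zero, add_zero]
    exact hU.nonneg z s (hs₀.trans hs.1) (ofReal_lt_of_le hs.2 ht₀)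
  have hstrip : ∀ p : ℝ × ℝ, p.2 ∈ Icc s₀ t₀ → ENNReal.ofReal p.2 < T := fun p hp ↦
    ofReal_lt_of_le hp.2 ht₀
  have hmode : IsHeatSupersolutionOn d (fun y t ↦ -g t * heatMode d R (y - y₀) (t - s₀))
      (fun y t ↦ -g' t * heatMode d R (y - y₀) (t - s₀)) (Ioo (y₀ - R) (y₀ + R) ×ˢ Ioc s₀ t₀) :=
    (isHeatSolutionOn_heatMode d R).time_mul_translate (fun _ _ _ ↦ mem_univ _)
      fun y s hs ↦ (hg' s hs.2).1.neg
  have hU_rect : IsHeatSupersolutionOn d U h (Ioo (y₀ - R) (y₀ + R) ×ˢ Ioc s₀ t₀) :=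
    hU.isHeatSupersolutionOn.mono fun p hp ↦ ⟨hs₀.trans_lt hp.2.1,
      hstrip p (Ioc_subset_Icc_self hp.2)⟩
  have hdiff := (hU_rect.add hmode).nonneg_on_rectangle hd ?_ (fun z hz s hs ↦ ?_) (fun z hz ↦ ?_)
    (hboundary _ (by simp [abs_of_pos hR])) (hboundary _ (by simp [abs_of_pos hR])) y
    ((hmem y).2 hy) t ht
  · linarith
  · have hshift : Continuous fun p : ℝ × ℝ ↦ (p.1 - y₀, p.2 - s₀) := by fun_prop
    exact (hU.continuousOn.mono fun p hp ↦ ⟨hs₀.trans hp.2.1, hstrip p hp.2⟩).add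
      ((hg.comp continuousOn_snd fun p hp ↦ hp.2).neg.mul
        ((continuous_heatMode d R).comp hshift).continuousOn)
  · have hmode_le : g' s * heatMode d R (z - y₀) (s - s₀) ≤ g' s :=
      mul_le_of_le_one_right (hg' s hs).2 (heatMode_le_one hd (sub_nonneg.2 hs.1.le))
    linarith [hh z s ((hmem z).1 (Ioo_subset_Icc_self hz)) hs]
  · have := hinit z ((hmem z).1 hz)
    rw [sub_self]
    linarith

section Interval

variable {s₀ t₀ y₀ R L : ℝ}

theorem half_exp_mul_le_of_le_source (hd : 0 ≤ d) (hs₀ : 0 ≤ s₀) (hst : s₀ ≤ t₀)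
    (ht₀ : ENNReal.ofReal t₀ < T) (hR : 0 < R) (hL : d * (π / (2 * R)) ^ 2 * (t₀ - s₀) ≤ L)
    {g g' : ℝ → ℝ} (hg : ContinuousOn g (Icc s₀ t₀))
    (hg' : ∀ s ∈ Ioc s₀ t₀, HasDerivAt g (g' s) s ∧ 0 ≤ g' s)
    (hh : ∀ y s, |y - y₀| ≤ R → s ∈ Ioc s₀ t₀ → g' s ≤ h y s)
    (hg₀ : 0 ≤ g s₀) (hinit : ∀ y, |y - y₀| ≤ R → g s₀ ≤ U y s₀) {y : ℝ} (hy : |y - y₀| ≤ R / 2) :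
    exp (-L) / 2 * g t₀ ≤ U y t₀ := by
  have hg_mono : MonotoneOn g (Icc s₀ t₀) :=
    monotoneOn_of_hasDerivWithinAt_nonneg (convex_Icc s₀ t₀) hg
      (fun s hs ↦ (hg' s (Ioo_subset_Ioc_self (by simpa using hs))).1.hasDerivWithinAt)
      fun s hs ↦ (hg' s (Ioo_subset_Ioc_self (by simpa using hs))).2
  have hg_nonneg : 0 ≤ g t₀ := hg₀.trans (hg_mono ⟨le_rfl, hst⟩ ⟨hst, le_rfl⟩ hst)
  calc exp (-L) / 2 * g t₀ ≤ heatMode d R (y - y₀) (t₀ - s₀) * g t₀ := by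
        gcongr; exact half_exp_neg_le_heatMode hR hy hL
    _ = g t₀ * heatMode d R (y - y₀) (t₀ - s₀) := mul_comm _ _
    _ ≤ U y t₀ := hU.mul_heatMode_le hd hs₀ ht₀ hR hg hg' hh (fun z hz ↦
        (mul_le_of_le_one_right hg₀ (heatMode_le_one hd le_rfl)).trans (hinit z hz)) y t₀
        (by linarith) ⟨hst, le_rfl⟩

theorem half_exp_mul_le_of_le_init (hd : 0 ≤ d) (hs₀ : 0 ≤ s₀) (hst : s₀ ≤ t₀)
    (ht₀ : ENNReal.ofReal t₀ < T) (hR : 0 < R) (hL : d * (π / (2 * R)) ^ 2 * (t₀ - s₀) ≤ L)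
    {a : ℝ} (ha : 0 ≤ a) (hinit : ∀ y, |y - y₀| ≤ R → a ≤ U y s₀) {y : ℝ}
    (hy : |y - y₀| ≤ R / 2) : exp (-L) / 2 * a ≤ U y t₀ :=
  hU.half_exp_mul_le_of_le_source hd hs₀ hst ht₀ hR hL (g := fun _ ↦ a) (g' := fun _ ↦ 0)
    continuousOn_const (fun s _ ↦ ⟨hasDerivAt_const s a, le_rfl⟩)
    (fun z s _ _ ↦ hU.source_nonneg z s) ha hinit hy

theorem half_exp_mul_le_of_const_le_source (hd : 0 ≤ d) (hs₀ : 0 ≤ s₀) (hst : s₀ ≤ t₀)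
    (ht₀ : ENNReal.ofReal t₀ < T) (hR : 0 < R) (hL : d * (π / (2 * R)) ^ 2 * (t₀ - s₀) ≤ L)
    {H : ℝ} (hH : 0 ≤ H) (hh : ∀ y s, |y - y₀| ≤ R → s ∈ Ioc s₀ t₀ → H ≤ h y s) {y : ℝ}
    (hy : |y - y₀| ≤ R / 2) : exp (-L) / 2 * (H * (t₀ - s₀)) ≤ U y t₀ :=
  hU.half_exp_mul_le_of_le_source hd hs₀ hst ht₀ hR hL (g := fun s ↦ H * (s - s₀))
    (g' := fun _ ↦ H) (by fun_prop)
    (fun s _ ↦ ⟨by simpa using ((hasDerivAt_id' s).sub_const s₀).const_mul H, hH⟩) hh (by simp)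
    (fun z _ ↦ by simpa using hU.nonneg z s₀ hs₀ (ofReal_lt_of_le hst ht₀)) hy

theorem half_exp_mul_le_of_le_source_parabolic (hd : 0 ≤ d) {t m H : ℝ} (ht : 0 < t)
    (htT : ENNReal.ofReal t < T) (hm : 0 < m) (hH : 0 ≤ H)
    (hh : ∀ y, ∀ s ∈ Ioc (t / 2) t, y ^ 2 ≤ m * s → H ≤ h y s) {y : ℝ} (hy : y ^ 2 ≤ m / 8 * t) :
    exp (-(d * π ^ 2 / (4 * m))) / 2 * (H * (t / 2)) ≤ U y t := by
  set R := √(m * t / 2)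
  have hR_sq : R ^ 2 = m * t / 2 := sq_sqrt (by positivity)
  have hR_pos : 0 < R := sqrt_pos.2 (by positivity)
  have hL : d * (π / (2 * R)) ^ 2 * (t - t / 2) = d * π ^ 2 / (4 * m) := by
    rw [div_pow, mul_pow, hR_sq]
    field_simp
    ring
  have hy_half : |y - 0| ≤ R / 2 := by
    rw [sub_zero]
    exact abs_le_of_sq_le_sq (by rw [div_pow, hR_sq]; linarith) (by positivity)
  have hle := hU.half_exp_mul_le_of_const_le_source hd (by positivity) (by linarith) htT hR_pos
    hL.le hH (fun z s hz hs ↦ hh z s hs ?_) hy_half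
  · rwa [sub_half] at hle
  · rw [sub_zero, ← abs_of_pos hR_pos, ← sq_le_sq, hR_sq] at hz
    nlinarith [hs.1]

end Interval

theorem le_of_isHeatSupersolutionOn_neg (hd : 0 ≤ d) {W : ℝ → ℝ → ℝ} {t K : ℝ} (ht : 0 ≤ t)
    (htT : ENNReal.ofReal t < T)
    (hW : IsHeatSupersolutionOn d (fun y s ↦ -W y s) (fun _ _ ↦ 0) (univ ×ˢ Ioc 0 t))
    (hcont : ContinuousOn (uncurry W) (univ ×ˢ Icc 0 t)) (hinit : ∀ y, W y 0 ≤ U y 0)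
    (hbdd : ∀ y, ∀ s ∈ Icc 0 t, W y s ≤ K) (y : ℝ) : W y t ≤ U y t := by
  have hstrip : ∀ s ∈ Icc 0 t, ENNReal.ofReal s < T := fun s hs ↦ ofReal_lt_of_le hs.2 htT
  have hU_strip : IsHeatSupersolutionOn d U h (univ ×ˢ Ioc 0 t) :=
    hU.isHeatSupersolutionOn.mono fun p hp ↦ ⟨hp.2.1, hstrip _ (Ioc_subset_Icc_self hp.2)⟩
  have hdiff := (hU_strip.add hW).nonneg_on_line hd (K := K)
    ((hU.continuousOn.mono fun p hp ↦ ⟨hp.2.1, hstrip _ hp.2⟩).add hcont.neg)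
    (fun z s _ ↦ by simpa using hU.source_nonneg z s) (fun z ↦ by linarith [hinit z])
    (fun z s hs ↦ by linarith [hbdd z s hs, hU.nonneg z s hs.1 (hstrip s hs)]) y t ⟨ht, le_rfl⟩
  linarith

/-- The subtracted, wider kernel makes the subsolution nonpositive for `r ≤ |y|` at time `0`, where
nothing better than `0 ≤ U` is known. -/
theorem mul_heatKernel_sub_le (hd : 0 < d) {a r θ : ℝ} (ha : 0 ≤ a)
    (hinit : ∀ y, |y| ≤ r → a ≤ U y 0) (hθ : 0 < θ)
    (hθr : ∀ y, r ≤ |y| → heatKernel d y θ ≤ heatKernel d y 1 / 2) {t : ℝ} (ht : 0 ≤ t)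
    (htT : ENNReal.ofReal t < T) (y : ℝ) :
    a * √θ * (heatKernel d y (t + θ) - heatKernel d y (t + 1) / 2) ≤ U y t := by
  set c := a * √θ
  have hbdd : ∀ z, ∀ s ∈ Icc 0 t,
      c * (heatKernel d z (s + θ) - heatKernel d z (s + 1) / 2) ≤ a := fun z s hs ↦ by
    have hs_nonneg : 0 ≤ s := hs.1
    calc c * (heatKernel d z (s + θ) - heatKernel d z (s + 1) / 2) ≤ c * (√θ)⁻¹ := by
          have hle : heatKernel d z (s + θ) ≤ (√(s + θ))⁻¹ := heatKernel_le hd.le (by positivity)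
          have hmono : (√(s + θ))⁻¹ ≤ (√θ)⁻¹ := by gcongr; linarith
          gcongr
          linarith [heatKernel_nonneg (d := d) (y := z) (s := s + 1)]
      _ = a := mul_inv_cancel_right₀ (sqrt_pos.2 hθ).ne' a
  refine hU.le_of_isHeatSupersolutionOn_neg hd.le ht htT
    (W := fun z s ↦ c * (heatKernel d z (s + θ) - heatKernel d z (s + 1) / 2)) ?_ ?_ (fun z ↦ ?_)
    hbdd y
  · convert (isHeatSupersolutionOn_mul_heatKernel hd.ne' (-c) hθ t).add
      (isHeatSupersolutionOn_mul_heatKernel hd.ne' (c / 2) one_pos t) using 3 <;> ring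
  · exact continuousOn_const.mul ((continuousOn_heatKernel_add hd.ne' hθ t).sub
      ((continuousOn_heatKernel_add hd.ne' one_pos t).div_const 2))
  · rcases le_total |z| r with hz | hz
    · exact (hbdd z 0 ⟨le_rfl, ht⟩).trans (hinit z hz)
    · have hdiff : heatKernel d z (0 + θ) - heatKernel d z (0 + 1) / 2 ≤ 0 := by
        simpa using hθr z hz
      exact (mul_nonpos_of_nonneg_of_nonpos (by positivity) hdiff).trans
        (hU.nonneg z 0 le_rfl (ofReal_lt_of_le ht htT))

theorem exists_div_sqrt_le (hd : 0 < d) {a r : ℝ} (ha : 0 < a) (hr : 0 < r)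
    (hinit : ∀ y, |y| ≤ r → a ≤ U y 0) :
    ∃ A > 0, ∀ t, 0 ≤ t → ENNReal.ofReal t < T → ∀ y, y ^ 2 ≤ d * t → A / √(t + 1) ≤ U y t := by
  obtain ⟨θ, hθ, hθr⟩ := exists_heatKernel_le_half hd hr
  have hθ_pos : 0 < θ := hθ.1
  refine ⟨a * √θ / 4, by positivity, fun t ht htT y hy ↦ ?_⟩
  calc a * √θ / 4 / √(t + 1) = a * √θ * ((√(t + 1))⁻¹ / 4) := by ring
    _ ≤ a * √θ * (heatKernel d y (t + θ) - heatKernel d y (t + 1) / 2) := by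
        gcongr; exact inv_sqrt_le_heatKernel_sub hd hθ ht hy
    _ ≤ U y t := hU.mul_heatKernel_sub_le hd ha.le hinit hθ.1 hθr ht htT y

section BandSource

variable {β κ t : ℝ} (hβ : β ≠ 0) (hκ : 0 ≤ κ)
  (hband : ∀ s, 1 ≤ s → ENNReal.ofReal s < T → ∀ w, √s ≤ w → w ≤ s / 2 → κ / (s + 1) ≤ h (-β * w) s)
include hβ hκ hband

omit hU hκ in
theorem le_source_of_abs_sub_le {s w₀ r y : ℝ} (hs : 1 ≤ s) (hsT : ENNReal.ofReal s < T)
    (hlow : √s ≤ w₀ - r) (hupp : w₀ + r ≤ s / 2) (hy : |y - -β * w₀| ≤ |β| * r) :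
    κ / (s + 1) ≤ h y s := by
  obtain ⟨w, rfl⟩ : ∃ w, y = -β * w := ⟨-(y / β), by field_simp⟩
  rw [← mul_sub, abs_mul, abs_neg, mul_le_mul_iff_right₀ (abs_pos.2 hβ), abs_le] at hy
  exact hband s hs hsT w (by linarith) (by linarith)

theorem mul_log_le_of_band_source (hd : 0 ≤ d) (ht : 2401 ≤ t) (htT : ENNReal.ofReal t < T) :
    exp (-(d * π ^ 2 / (4 * β ^ 2))) / 2 * (κ * (log (t + 1) / 4)) ≤ U (-β * (2 * √t)) t := by
  set p := √t
  have hp_sq : p ^ 2 = t := sq_sqrt (by linarith)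
  have hp_ge : 49 ≤ p := le_sqrt_of_sq_le (by linarith)
  have hR : 0 < |β| * p := by positivity
  have hrate : d * (π / (2 * (|β| * p))) ^ 2 * (t - 6 * p) ≤ d * π ^ 2 / (4 * β ^ 2) := by
    calc d * (π / (2 * (|β| * p))) ^ 2 * (t - 6 * p) ≤ d * (π / (2 * (|β| * p))) ^ 2 * t := by
          gcongr; linarith
      _ = d * π ^ 2 / (4 * β ^ 2) := by
          rw [div_pow, mul_pow, mul_pow, sq_abs, hp_sq]
          field_simp
          norm_num
  have hderiv : ∀ s ∈ Icc (6 * p) t,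
      HasDerivAt (fun s ↦ κ * (log (s + 1) - log (6 * p + 1))) (κ / (s + 1)) s ∧
        0 ≤ κ / (s + 1) := fun s hs ↦ by
    have hs_pos : 0 < s + 1 := by linarith [hs.1]
    refine ⟨?_, by positivity⟩
    simpa [div_eq_mul_inv] using
      ((((hasDerivAt_id' s).add_const 1).log hs_pos.ne').sub_const (log (6 * p + 1))).const_mul κ
  have hsource : ∀ y s, |y - -β * (2 * p)| ≤ |β| * p → s ∈ Ioc (6 * p) t →
      κ / (s + 1) ≤ h y s := fun y s hy hs ↦
    le_source_of_abs_sub_le hβ hband (by linarith [hs.1]) (ofReal_lt_of_le hs.2 htT)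
      (by linarith [sqrt_le_sqrt hs.2]) (by linarith [hs.1]) hy
  calc exp (-(d * π ^ 2 / (4 * β ^ 2))) / 2 * (κ * (log (t + 1) / 4))
      ≤ exp (-(d * π ^ 2 / (4 * β ^ 2))) / 2 * (κ * (log (t + 1) - log (6 * p + 1))) := by
        gcongr; exact log_add_one_div_four_le ht
    _ ≤ U (-β * (2 * p)) t :=
        hU.half_exp_mul_le_of_le_source hd (by positivity) (by nlinarith) htT hR hrate
          (fun s hs ↦ (hderiv s hs).1.continuousAt.continuousWithinAt)
          (fun s hs ↦ hderiv s (Ioc_subset_Icc_self hs))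
          hsource (by simp) (fun y _ ↦ by
            simpa using hU.nonneg y _ (by positivity) (ofReal_lt_of_le (by nlinarith) htT))
          (by rw [sub_self, abs_zero]; positivity)

theorem half_exp_mul_le_of_band_source (hd : 0 ≤ d) (ht : 64 ≤ t) (htT : ENNReal.ofReal t < T)
    {y : ℝ} (hy : |y - -β * (3 * t / 16)| ≤ |β| * (t / 16) / 2) :
    exp (-(d * π ^ 2 / β ^ 2)) / 2 * (κ / 4) ≤ U y t := by
  have hR : 0 < |β| * (t / 16) := by positivity
  have hrate : d * (π / (2 * (|β| * (t / 16)))) ^ 2 * (t - t / 2) ≤ d * π ^ 2 / β ^ 2 := by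
    calc d * (π / (2 * (|β| * (t / 16)))) ^ 2 * (t - t / 2) = d * π ^ 2 / β ^ 2 * (32 / t) := by
          rw [div_pow, mul_pow, mul_pow, sq_abs]
          field_simp
          ring
      _ ≤ d * π ^ 2 / β ^ 2 :=
          mul_le_of_le_one_right (by positivity) ((div_le_one (by linarith)).2 (by linarith))
  have hsqrt : √t ≤ t / 8 := sqrt_le_iff.2 ⟨by linarith, by nlinarith⟩
  have hsource : ∀ z s, |z - -β * (3 * t / 16)| ≤ |β| * (t / 16) → s ∈ Ioc (t / 2) t →
      κ / (t + 1) ≤ h z s := fun z s hz hs ↦ by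
    have hs_pos : 0 < s := by linarith [hs.1]
    calc κ / (t + 1) ≤ κ / (s + 1) := by gcongr; exact hs.2
      _ ≤ h z s := le_source_of_abs_sub_le hβ hband (by linarith [hs.1])
          (ofReal_lt_of_le hs.2 htT) (by linarith [sqrt_le_sqrt hs.2]) (by linarith [hs.1]) hz
  calc exp (-(d * π ^ 2 / β ^ 2)) / 2 * (κ / 4)
      ≤ exp (-(d * π ^ 2 / β ^ 2)) / 2 * (κ / (t + 1) * (t - t / 2)) := by
        gcongr
        rw [div_mul_eq_mul_div, div_le_div_iff₀ (by norm_num) (by linarith)]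
        nlinarith
    _ ≤ U y t := hU.half_exp_mul_le_of_const_le_source hd (by positivity) (by linarith) htT hR
        hrate (by positivity) hsource hy

end BandSource

end IsNonnegHeatSupersolution

/-- Both lower bounds of the growth theorem at time `t`, for the profile `w` of the solution. -/
def GrowthAt (c t : ℝ) (w : ℝ → ℝ) : Prop :=
  (∃ y, c * log (1 + t) ≤ w y) ∧ ENNReal.ofReal (c * t) ≤ ∫⁻ y, ENNReal.ofReal (w y)

theorem ofReal_mul_le_lintegral_of_le {w : ℝ → ℝ} {H R y₀ : ℝ} (hR : 0 ≤ R)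
    (hw : ∀ y, |y - y₀| ≤ R → H ≤ w y) :
    ENNReal.ofReal (H * (2 * R)) ≤ ∫⁻ y, ENNReal.ofReal (w y) := by
  calc ENNReal.ofReal (H * (2 * R)) = ∫⁻ _ in Metric.closedBall y₀ R, ENNReal.ofReal H := by
        rw [setLIntegral_const, Real.volume_closedBall, ENNReal.ofReal_mul' (by positivity)]
    _ ≤ ∫⁻ y in Metric.closedBall y₀ R, ENNReal.ofReal (w y) :=
        setLIntegral_mono' measurableSet_closedBall fun y hy ↦
          ENNReal.ofReal_le_ofReal (hw y (by rwa [Metric.mem_closedBall, Real.dist_eq] at hy))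
    _ ≤ ∫⁻ y, ENNReal.ofReal (w y) := setLIntegral_le_lintegral _ _

namespace GrowthAt

variable {c c' t : ℝ} {w w' : ℝ → ℝ}

theorem mono (h : GrowthAt c t w) (ht : 0 ≤ t) (hc : c' ≤ c) (hw : ∀ y, w y ≤ w' y) :
    GrowthAt c' t w' := by
  obtain ⟨⟨y, hy⟩, hlintegral⟩ := h
  constructor
  · exact ⟨y, (mul_le_mul_of_nonneg_right hc (log_nonneg (by linarith))).trans (hy.trans (hw y))⟩
  · calc ENNReal.ofReal (c' * t) ≤ ENNReal.ofReal (c * t) := by gcongr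
      _ ≤ ∫⁻ y, ENNReal.ofReal (w y) := hlintegral
      _ ≤ ∫⁻ y, ENNReal.ofReal (w' y) := by gcongr; exact hw _

theorem of_comp_add {a : ℝ} (h : GrowthAt c t fun y ↦ w (y + a)) : GrowthAt c t w := by
  obtain ⟨⟨y, hy⟩, hlintegral⟩ := h
  refine ⟨⟨y + a, hy⟩, ?_⟩
  rwa [lintegral_add_right_eq_self (fun y ↦ ENNReal.ofReal (w y)) a] at hlintegral

theorem of_le_on_interval {H R : ℝ} (ht : 0 ≤ t) (hc : 0 ≤ c) (hR : 0 ≤ R)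
    (hw : ∀ y, |y| ≤ R → H ≤ w y) (hlog : c * t ≤ H) (hlintegral : c * t ≤ H * (2 * R)) :
    GrowthAt c t w := by
  constructor
  · refine ⟨0, le_trans ?_ (hlog.trans (hw 0 (by simpa using hR)))⟩
    gcongr
    linarith [log_le_sub_one_of_pos (show 0 < 1 + t by linarith)]
  · exact (ENNReal.ofReal_le_ofReal hlintegral).trans
      (ofReal_mul_le_lintegral_of_le (y₀ := 0) hR (by simpa using hw))

end GrowthAt

theorem IsNonnegHeatSupersolution.exists_growthAt_of_le {d a r t₀ : ℝ} {T : ENNReal}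
    {U h : ℝ → ℝ → ℝ} (hU : IsNonnegHeatSupersolution d T U h) (hd : 0 ≤ d) (ha : 0 < a)
    (hr : 0 < r) (hinit : ∀ y, |y| ≤ r → a ≤ U y 0) (ht₀ : 0 < t₀) :
    ∃ c > 0, ∀ t, 0 ≤ t → t ≤ t₀ → ENNReal.ofReal t < T → GrowthAt c t fun y ↦ U y t := by
  set H := exp (-(d * (π / (2 * r)) ^ 2 * t₀)) / 2 * a
  refine ⟨min 1 r * (H / t₀), by positivity, fun t ht htt₀ htT ↦ ?_⟩
  have hHt : H / t₀ * t ≤ H := by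
    rw [div_mul_eq_mul_div]
    exact div_le_of_le_mul₀ ht₀.le (by positivity) (by gcongr)
  refine GrowthAt.of_le_on_interval (H := H) (R := r / 2) ht (by positivity) (by positivity)
    (fun y hy ↦ ?_) ?_ ?_
  · exact hU.half_exp_mul_le_of_le_init hd le_rfl ht htT hr (y₀ := 0) (by rw [sub_zero]; gcongr)
      ha.le (by simpa using hinit) (by simpa using hy)
  · calc min 1 r * (H / t₀) * t = min 1 r * (H / t₀ * t) := mul_assoc _ _ _
      _ ≤ 1 * H := by gcongr; exact min_le_left _ _
      _ = H := one_mul H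
  · calc min 1 r * (H / t₀) * t = min 1 r * (H / t₀ * t) := mul_assoc _ _ _
      _ ≤ r * H := by gcongr; exact min_le_right _ _
      _ = H * (2 * (r / 2)) := by ring

/-! ### Coupled pairs in separating frames -/

/-- The pair `(U, V)` of supersolutions driven by each other's square. Each component is described
in its own comoving frame, and the origins of the two frames separate with velocity `β`. -/
structure IsComovingPair (d₁ d₂ β : ℝ) (T : ENNReal) (U V : ℝ → ℝ → ℝ) : Prop where
  left : IsNonnegHeatSupersolution d₁ T U fun y t ↦ V (y - β * t) t ^ 2
  right : IsNonnegHeatSupersolution d₂ T V fun y t ↦ U (y + β * t) t ^ 2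

namespace IsComovingPair

variable {d₁ d₂ β a r : ℝ} {T : ENNReal} {U V : ℝ → ℝ → ℝ}

section DiffusiveLowerBound

variable {A : ℝ} (hd₁ : 0 ≤ d₁) (hd₂ : 0 < d₂) (hA : 0 < A)
  (hV : ∀ t, 0 ≤ t → ENNReal.ofReal t < T → ∀ y, y ^ 2 ≤ d₂ * t → A / √(t + 1) ≤ V y t)
include hd₁ hd₂ hA hV

theorem exists_mul_le_of_zero_speed (h : IsComovingPair d₁ d₂ 0 T U V) :
    ∃ c > 0, ∀ t, 2 ≤ t → ENNReal.ofReal t < T → ∀ y, y ^ 2 ≤ d₂ / 64 * t → c * t ≤ V y t := by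
  set E₁ := exp (-(d₁ * π ^ 2 / (4 * d₂)))
  set E₂ := exp (-(d₂ * π ^ 2 / (4 * (d₂ / 8))))
  set κ := E₁ / 2 * (A ^ 2 / 4) with hκ
  have hU : ∀ t, 1 ≤ t → ENNReal.ofReal t < T → ∀ y, y ^ 2 ≤ d₂ / 8 * t → κ ≤ U y t := by
    intro t ht htT y hy
    have ht_pos : 0 < t := by linarith
    calc κ ≤ E₁ / 2 * (A ^ 2 / (t + 1) * (t / 2)) := by
          rw [hκ]
          gcongr E₁ / 2 * ?_
          rw [div_mul_div_comm, div_le_div_iff₀ (by norm_num) (by positivity)]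
          nlinarith [sq_nonneg A]
      _ ≤ U y t := by
          refine h.left.half_exp_mul_le_of_le_source_parabolic hd₁ ht_pos htT hd₂ (by positivity)
            (fun z s hs hz ↦ ?_) hy
          have hs_pos : 0 < s := by linarith [hs.1]
          calc A ^ 2 / (t + 1) ≤ A ^ 2 / (s + 1) := by gcongr; exact hs.2
            _ = (A / √(s + 1)) ^ 2 := by rw [div_pow, sq_sqrt (by positivity)]
            _ ≤ V (z - 0 * s) s ^ 2 := by
                gcongr
                simpa using hV s hs_pos.le (ofReal_lt_of_le hs.2 htT) z hz
  refine ⟨E₂ / 2 * (κ ^ 2 / 2), by positivity, fun t ht htT y hy ↦ ?_⟩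
  calc E₂ / 2 * (κ ^ 2 / 2) * t = E₂ / 2 * (κ ^ 2 * (t / 2)) := by ring
    _ ≤ V y t := by
        refine h.right.half_exp_mul_le_of_le_source_parabolic hd₂.le (by linarith) htT
          (by positivity) (by positivity) (fun z s hs hz ↦ ?_) (by linarith)
        gcongr
        simpa using hU s (by linarith [hs.1]) (ofReal_lt_of_le hs.2 htT) z hz

theorem exists_eventually_growthAt_of_zero_speed (h : IsComovingPair d₁ d₂ 0 T U V) :
    ∃ c > 0, ∃ t₀ > 0, ∀ t, t₀ ≤ t → ENNReal.ofReal t < T → GrowthAt c t fun y ↦ V y t := by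
  obtain ⟨c, hc, hle⟩ := h.exists_mul_le_of_zero_speed hd₁ hd₂ hA hV
  set R := √(d₂ / 64)
  have hR_pos : 0 < R := sqrt_pos.2 (by positivity)
  refine ⟨c * min 1 (2 * R), by positivity, 2, two_pos, fun t ht htT ↦ ?_⟩
  refine GrowthAt.of_le_on_interval (H := c * t) (R := R) (by linarith) (by positivity) hR_pos.le
    (fun y hy ↦ hle t ht htT y ?_) ?_ ?_
  · have hy_sq : y ^ 2 ≤ R ^ 2 := sq_le_sq.2 (by rwa [abs_of_pos hR_pos])
    rw [sq_sqrt (by positivity)] at hy_sq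
    nlinarith
  · nlinarith [min_le_left 1 (2 * R), mul_pos hc (show 0 < t by linarith)]
  · nlinarith [min_le_right 1 (2 * R), mul_pos hc (show 0 < t by linarith)]

theorem half_exp_mul_le_left (h : IsComovingPair d₁ d₂ β T U V)
    {s τ : ℝ} (hs : 0 < s) (hτ : 0 ≤ τ) (hτs : τ ≤ s) (hβτ : |β| * τ ≤ √(d₂ * s) / 2)
    (hT : ENNReal.ofReal (s + τ) < T) {y : ℝ} (hy : |y - β * s| ≤ √(d₂ * s) / 2 / 2) :
    exp (-(d₁ * π ^ 2 / d₂)) / 2 * (A ^ 2 / (s + τ + 1) * τ) ≤ U y (s + τ) := by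
  set R := √(d₂ * s) / 2 with hR
  have hR_pos : 0 < R := by positivity
  have hR_sq : (2 * R) ^ 2 = d₂ * s := by
    rw [hR, mul_div_cancel₀ _ two_ne_zero, sq_sqrt (by positivity)]
  have hrate : d₁ * (π / (2 * R)) ^ 2 * (s + τ - s) ≤ d₁ * π ^ 2 / d₂ := by
    calc d₁ * (π / (2 * R)) ^ 2 * (s + τ - s) = d₁ * π ^ 2 / d₂ * (τ / s) := by
          rw [div_pow, hR_sq]
          field_simp
          ring
      _ ≤ d₁ * π ^ 2 / d₂ := mul_le_of_le_one_right (by positivity) ((div_le_one hs).2 hτs)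
  have hle := h.left.half_exp_mul_le_of_const_le_source hd₁ hs.le (by linarith) hT hR_pos hrate
    (H := A ^ 2 / (s + τ + 1)) (by positivity) (fun z σ hz hσ ↦ ?_) hy
  · rwa [add_sub_cancel_left] at hle
  have hσ_pos : 0 < σ := hs.trans hσ.1
  have hshift : |z - β * σ| ≤ 2 * R := by
    calc |z - β * σ| = |(z - β * s) + β * (s - σ)| := by ring_nf
      _ ≤ |z - β * s| + |β| * |s - σ| := by rw [← abs_mul]; exact abs_add_le _ _
      _ ≤ R + |β| * τ := by
          gcongr
          rw [abs_sub_comm, abs_of_pos (sub_pos.2 hσ.1)]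
          linarith [hσ.2]
      _ ≤ 2 * R := by linarith
  have hdiffusive : (z - β * σ) ^ 2 ≤ d₂ * σ := by
    calc (z - β * σ) ^ 2 ≤ (2 * R) ^ 2 := sq_le_sq' (abs_le.1 hshift).1 (abs_le.1 hshift).2
      _ = d₂ * s := hR_sq
      _ ≤ d₂ * σ := by gcongr; exact hσ.1.le
  calc A ^ 2 / (s + τ + 1) ≤ A ^ 2 / (σ + 1) := by gcongr; exact hσ.2
    _ = (A / √(σ + 1)) ^ 2 := by rw [div_pow, sq_sqrt (by positivity)]
    _ ≤ V (z - β * σ) σ ^ 2 := by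
        gcongr
        exact hV σ hσ_pos.le (ofReal_lt_of_le hσ.2 hT) _ hdiffusive

/-- At time `σ` the diffusive region of `V` is centred at `β * σ` in the frame of `U`. It acts on
that point until `σ + τ`, and the Dirichlet mode preserves the result until `s`. -/
theorem half_exp_mul_le_left_at_center (h : IsComovingPair d₁ d₂ β T U V)
    {σ τ s : ℝ} (hσ : 0 < σ) (hτ : 0 ≤ τ) (hβτ : |β| * τ ≤ √(d₂ * σ) / 2) (hστ : σ + τ ≤ s)
    (hs : s ≤ 2 * σ) (hsT : ENNReal.ofReal s < T) :
    exp (-(4 * d₁ * π ^ 2 / d₂)) / 2 *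
      (exp (-(d₁ * π ^ 2 / d₂)) / 2 * (A ^ 2 / (σ + τ + 1) * τ)) ≤ U (β * σ) s := by
  set R := √(d₂ * σ) / 2 with hR
  have hR_pos : 0 < R := by positivity
  have hR_sq : (2 * (R / 2)) ^ 2 = d₂ * σ / 4 := by
    rw [mul_div_cancel₀ _ two_ne_zero, hR, div_pow, sq_sqrt (by positivity)]
    norm_num
  have hrate : d₁ * (π / (2 * (R / 2))) ^ 2 * (s - (σ + τ)) ≤ 4 * d₁ * π ^ 2 / d₂ := by
    calc d₁ * (π / (2 * (R / 2))) ^ 2 * (s - (σ + τ)) ≤ d₁ * (π / (2 * (R / 2))) ^ 2 * σ := by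
          gcongr
          linarith
      _ = 4 * d₁ * π ^ 2 / d₂ := by
          rw [div_pow, hR_sq]
          field_simp
  exact h.left.half_exp_mul_le_of_le_init hd₁ (by positivity) hστ hsT (half_pos hR_pos) hrate
    (by positivity)
    (fun y hy ↦ h.half_exp_mul_le_left hd₁ hd₂ hA hV hσ hτ (by linarith) hβτ
      (ofReal_lt_of_le hστ hsT) hy)
    (by rw [sub_self, abs_zero]; positivity)

theorem exists_div_sqrt_le_left_on_band (h : IsComovingPair d₁ d₂ β T U V) :
    ∃ κ > 0, ∀ s, 1 ≤ s → ENNReal.ofReal s < T → ∀ w, √s ≤ w → w ≤ s / 2 →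
      κ / √(s + 1) ≤ U (β * (s - w)) s := by
  obtain ⟨η, hη_pos, hη_one, hη_speed⟩ := exists_pos_le_one_mul_le |β| (half_pos (sqrt_pos.2 hd₂))
  set E₁ := exp (-(d₁ * π ^ 2 / d₂)) / 2
  set E₂ := exp (-(4 * d₁ * π ^ 2 / d₂)) / 2
  refine ⟨E₂ * (E₁ * (A ^ 2 * (η / 2))), by positivity, fun s hs hsT w hw_low hw_upp ↦ ?_⟩
  set σ := s - w
  have hσ_pos : 0 < σ := by linarith
  have hτ_le : η * √σ ≤ w := by
    calc η * √σ ≤ √σ := mul_le_of_le_one_left (sqrt_nonneg _) hη_one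
      _ ≤ √s := sqrt_le_sqrt (by linarith [sqrt_nonneg s])
      _ ≤ w := hw_low
  have hspeed : |β| * (η * √σ) ≤ √(d₂ * σ) / 2 := by
    calc |β| * (η * √σ) = |β| * η * √σ := (mul_assoc _ _ _).symm
      _ ≤ √d₂ / 2 * √σ := by gcongr
      _ = √(d₂ * σ) / 2 := by rw [sqrt_mul hd₂.le]; ring
  have hsqrt : √(s + 1) ≤ 2 * √σ := by
    rw [sqrt_le_left (by positivity), mul_pow, sq_sqrt hσ_pos.le]
    linarith
  calc E₂ * (E₁ * (A ^ 2 * (η / 2))) / √(s + 1)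
      = E₂ * (E₁ * (A ^ 2 / √(s + 1) ^ 2 * (η * (√(s + 1) / 2)))) := by field_simp
    _ ≤ E₂ * (E₁ * (A ^ 2 / (σ + η * √σ + 1) * (η * √σ))) := by
        rw [sq_sqrt (by positivity)]
        gcongr <;> linarith
    _ ≤ U (β * σ) s := h.half_exp_mul_le_left_at_center hd₁ hd₂ hA hV hσ_pos (by positivity)
        hspeed (by linarith) (by linarith) hsT

theorem exists_eventually_growthAt_of_ne_zero (h : IsComovingPair d₁ d₂ β T U V) (hβ : β ≠ 0) :
    ∃ c > 0, ∃ t₀ > 0, ∀ t, t₀ ≤ t → ENNReal.ofReal t < T → GrowthAt c t fun y ↦ V y t := by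
  obtain ⟨κ, hκ, hU⟩ := h.exists_div_sqrt_le_left_on_band hd₁ hd₂ hA hV
  have hband : ∀ s, 1 ≤ s → ENNReal.ofReal s < T → ∀ w, √s ≤ w → w ≤ s / 2 →
      κ ^ 2 / (s + 1) ≤ U (-β * w + β * s) s ^ 2 := fun s hs hsT w hw_low hw_upp ↦ by
    calc κ ^ 2 / (s + 1) = (κ / √(s + 1)) ^ 2 := by rw [div_pow, sq_sqrt (by positivity)]
      _ ≤ U (β * (s - w)) s ^ 2 := by gcongr; exact hU s hs hsT w hw_low hw_upp
      _ = U (-β * w + β * s) s ^ 2 := by ring_nf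
  set C := exp (-(d₂ * π ^ 2 / (4 * β ^ 2))) / 2 * (κ ^ 2 / 4) with hC
  set H := exp (-(d₂ * π ^ 2 / β ^ 2)) / 2 * (κ ^ 2 / 4)
  refine ⟨min C (H * (|β| / 16)), by positivity, 2401, by norm_num, fun t ht htT ↦ ⟨?_, ?_⟩⟩
  · refine ⟨-β * (2 * √t), ?_⟩
    calc min C (H * (|β| / 16)) * log (1 + t) ≤ C * log (1 + t) := by
          gcongr
          · exact log_nonneg (by linarith)
          · exact min_le_left _ _
      _ = exp (-(d₂ * π ^ 2 / (4 * β ^ 2))) / 2 * (κ ^ 2 * (log (t + 1) / 4)) := by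
          rw [hC, add_comm]; ring
      _ ≤ V (-β * (2 * √t)) t :=
          h.right.mul_log_le_of_band_source hβ (sq_nonneg κ) hband hd₂.le ht htT
  · calc ENNReal.ofReal (min C (H * (|β| / 16)) * t)
        ≤ ENNReal.ofReal (H * (2 * (|β| * (t / 16) / 2))) := by
          refine ENNReal.ofReal_le_ofReal ?_
          calc min C (H * (|β| / 16)) * t ≤ H * (|β| / 16) * t := by
                gcongr; exact min_le_right _ _
            _ = H * (2 * (|β| * (t / 16) / 2)) := by ring
      _ ≤ ∫⁻ y, ENNReal.ofReal (V y t) :=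
          ofReal_mul_le_lintegral_of_le (by positivity) fun y hy ↦
            h.right.half_exp_mul_le_of_band_source hβ (sq_nonneg κ) hband hd₂.le (by linarith)
              htT hy

end DiffusiveLowerBound

theorem exists_growthAt (h : IsComovingPair d₁ d₂ β T U V) (hd₁ : 0 ≤ d₁) (hd₂ : 0 < d₂)
    (ha : 0 < a) (hr : 0 < r) (hinit : ∀ y, |y| ≤ r → a ≤ V y 0) :
    ∃ c > 0, ∀ t, 0 ≤ t → ENNReal.ofReal t < T → GrowthAt c t fun y ↦ V y t := by
  obtain ⟨A, hA, hV⟩ := h.right.exists_div_sqrt_le hd₂ ha hr hinit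
  obtain ⟨c₁, hc₁, t₀, ht₀, hlarge⟩ :
      ∃ c > 0, ∃ t₀ > 0, ∀ t, t₀ ≤ t → ENNReal.ofReal t < T → GrowthAt c t fun y ↦ V y t := by
    rcases eq_or_ne β 0 with rfl | hβ
    · exact h.exists_eventually_growthAt_of_zero_speed hd₁ hd₂ hA hV
    · exact h.exists_eventually_growthAt_of_ne_zero hd₁ hd₂ hA hV hβ
  obtain ⟨c₂, hc₂, hsmall⟩ := h.right.exists_growthAt_of_le hd₂.le ha hr hinit ht₀
  refine ⟨min c₁ c₂, by positivity, fun t ht htT ↦ ?_⟩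
  rcases le_total t₀ t with htt | htt
  · exact (hlarge t htt htT).mono ht (min_le_left _ _) fun _ ↦ le_rfl
  · exact (hsmall t ht htt htT).mono ht (min_le_right _ _) fun _ ↦ le_rfl

end IsComovingPair

/-! ### Classical solutions in moving frames -/

/-- The function `w` seen from the frame with origin `x₀ - c * t` at time `t`. In this frame the
advection term of `w_t = d w_xx + c w_x + f` disappears. -/
def comovingFrame (c x₀ : ℝ) (w : ℝ → ℝ → ℝ) (y t : ℝ) : ℝ := w (y + x₀ - c * t) t

section ComovingFrame

variable {c x₀ y t : ℝ} {w wt wx wxx f : ℝ → ℝ → ℝ} {Ω Ω' : Set (ℝ × ℝ)}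

theorem hasDerivAt_comovingFrame_space {w' : ℝ}
    (hw : HasDerivAt (fun ξ ↦ w ξ t) w' (y + x₀ - c * t)) :
    HasDerivAt (fun ξ ↦ comovingFrame c x₀ w ξ t) w' y :=
  (hw.comp_sub_const (y + x₀) (c * t)).comp_add_const y x₀

theorem hasDerivAt_comovingFrame_time (hΩ : IsOpen Ω)
    (hwt : ∀ x s, (x, s) ∈ Ω → HasDerivAt (fun τ ↦ w x τ) (wt x s) s)
    (hwx : ∀ x s, (x, s) ∈ Ω → HasDerivAt (fun ξ ↦ w ξ s) (wx x s) x)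
    (hwt_cont : ContinuousOn (uncurry wt) Ω) (hwx_cont : ContinuousOn (uncurry wx) Ω)
    (hmem : (y + x₀ - c * t, t) ∈ Ω) :
    HasDerivAt (fun τ ↦ comovingFrame c x₀ w y τ)
      (comovingFrame c x₀ wt y t - c * comovingFrame c x₀ wx y t) t := by
  have hnhds := hΩ.mem_nhds hmem
  have hspan := (ContinuousLinearMap.toSpanSingletonCLE (𝕜 := ℝ) (E := ℝ)).continuous
  have hfderiv := hasStrictFDerivAt_uncurry_coprod (𝕜 := ℝ) (u := (y + x₀ - c * t, t)) (f := w)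
    (f₁ := fun x s ↦ ContinuousLinearMap.toSpanSingleton ℝ (wx x s))
    (f₂ := fun x s ↦ ContinuousLinearMap.toSpanSingleton ℝ (wt x s))
    (by filter_upwards [hnhds] with p hp using (hwx p.1 p.2 hp).hasFDerivAt)
    (by filter_upwards [hnhds] with p hp using (hwt p.1 p.2 hp).hasFDerivAt)
    (hspan.continuousAt.comp (hwx_cont.continuousAt hnhds))
    (hspan.continuousAt.comp (hwt_cont.continuousAt hnhds))
  have hcurve : HasDerivAt (fun τ : ℝ ↦ (y + x₀ - c * τ, τ)) (-c, 1) t := by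
    refine HasDerivAt.prodMk ?_ (hasDerivAt_id' t)
    simpa using ((hasDerivAt_id' t).const_mul c).const_sub (y + x₀)
  refine (hfderiv.hasFDerivAt.comp_hasDerivAt (f := fun τ : ℝ ↦ (y + x₀ - c * τ, τ)) t
    hcurve).congr_deriv ?_
  simp [comovingFrame, HasUncurry.uncurry]
  ring

theorem isHeatSupersolutionOn_comovingFrame {d : ℝ} (hΩ : IsOpen Ω)
    (hwt : ∀ x s, (x, s) ∈ Ω → HasDerivAt (fun τ ↦ w x τ) (wt x s) s)
    (hwx : ∀ x s, (x, s) ∈ Ω → HasDerivAt (fun ξ ↦ w ξ s) (wx x s) x)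
    (hwxx : ∀ x s, (x, s) ∈ Ω → HasDerivAt (fun ξ ↦ wx ξ s) (wxx x s) x)
    (hwt_cont : ContinuousOn (uncurry wt) Ω) (hwx_cont : ContinuousOn (uncurry wx) Ω)
    (hle : ∀ x s, (x, s) ∈ Ω → d * wxx x s + c * wx x s + f x s ≤ wt x s)
    (hmem : ∀ p ∈ Ω', (p.1 + x₀ - c * p.2, p.2) ∈ Ω) :
    IsHeatSupersolutionOn d (comovingFrame c x₀ w) (comovingFrame c x₀ f) Ω' := by
  refine ⟨fun y t ↦ comovingFrame c x₀ wt y t - c * comovingFrame c x₀ wx y t,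
    comovingFrame c x₀ wx, comovingFrame c x₀ wxx, fun y t hyt ↦ ⟨?_, ?_, ?_, ?_⟩⟩
  · exact hasDerivAt_comovingFrame_time hΩ hwt hwx hwt_cont hwx_cont (hmem _ hyt)
  · exact hasDerivAt_comovingFrame_space (hwx _ _ (hmem _ hyt))
  · exact hasDerivAt_comovingFrame_space (hwxx _ _ (hmem _ hyt))
  · have := hle _ _ (hmem _ hyt)
    simp only [comovingFrame]
    linarith

end ComovingFrame

theorem exists_half_le_comp_add_of_pos {g : ℝ → ℝ} {x₀ : ℝ} (hg : ContinuousAt g x₀)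
    (hpos : 0 < g x₀) : ∃ r > 0, ∀ y, |y| ≤ r → g x₀ / 2 ≤ g (y + x₀) := by
  obtain ⟨r, hr, hball⟩ := Metric.nhds_basis_closedBall.eventually_iff.1
    (hg.eventually (lt_mem_nhds (half_lt_self hpos)))
  exact ⟨r, hr, fun y hy ↦ (hball (by simpa [Real.dist_eq] using hy)).le⟩

namespace IsClassicalSolution

variable {d₁ d₂ c₁ c₂ : ℝ} {f₁ f₂ g₁ g₂ : ℝ × ℝ → ℝ} {T : ENNReal} {u₀ v₀ : ℝ → ℝ}
  {u v : ℝ → ℝ → ℝ}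

theorem swap (hsol : IsClassicalSolution d₁ d₂ c₁ c₂ f₁ f₂ g₁ g₂ T u₀ v₀ u v) :
    IsClassicalSolution d₂ d₁ c₂ c₁ (f₂ ∘ Prod.swap) (f₁ ∘ Prod.swap) (g₂ ∘ Prod.swap)
      (g₁ ∘ Prod.swap) T v₀ u₀ v u := by
  obtain ⟨hu₀, hv₀, hcont, hbdd, ut, vt, ux, vx, uxx, vxx, gx, hx, hD, hD_cont⟩ := hsol
  refine ⟨hv₀, hu₀, continuous_swap.comp_continuousOn hcont, ?_,
    vt, ut, vx, ux, vxx, uxx, hx, gx, ?_, ?_⟩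
  · simpa only [add_comm |v _ _|] using hbdd
  · intro x t ht htT
    obtain ⟨hut, hux, huxx, hgx, hvt, hvx, hvxx, hhx, hu_eq, hv_eq⟩ := hD x t ht htT
    exact ⟨hvt, hvx, hvxx, hhx, hut, hux, huxx, hgx, hv_eq, hu_eq⟩
  · have hperm : Continuous fun q : ℝ × ℝ × ℝ × ℝ × ℝ × ℝ ↦
        (q.2.2.2.1, q.2.2.2.2.1, q.2.2.2.2.2, q.1, q.2.1, q.2.2.1) := by fun_prop
    exact hperm.comp_continuousOn hD_cont

theorem continuous_snd_zero (hsol : IsClassicalSolution d₁ d₂ c₁ c₂ f₁ f₂ g₁ g₂ T u₀ v₀ u v)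
    (hT : 0 < T) : Continuous v₀ := by
  obtain ⟨-, hv₀, hcont, -⟩ := hsol
  have hline : Continuous fun x : ℝ ↦ (x, (0 : ℝ)) := by fun_prop
  simpa [comp_def, hv₀] using
    (hcont.snd).comp_continuous hline fun x ↦ ⟨le_rfl, by simpa using hT⟩

theorem isNonnegHeatSupersolution_fst
    (hsol : IsClassicalSolution d₁ d₂ c₁ c₂ f₁ f₂ (fun _ ↦ 0) g₂ T u₀ v₀ u v) (hd₁ : 0 ≤ d₁)
    (hf₁ : ∀ p, p.2 ^ 2 ≤ f₁ p) (hu₀ : ∀ x, 0 ≤ u₀ x) (x₀ : ℝ) :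
    IsNonnegHeatSupersolution d₁ T (comovingFrame c₁ x₀ u)
      (comovingFrame c₁ x₀ fun x t ↦ v x t ^ 2) := by
  obtain ⟨hinit, -, hcont, hbdd, ut, _, ux, _, uxx, _, gx, _, hD, hD_cont⟩ := hsol
  have hopen : IsOpen {p : ℝ × ℝ | 0 < p.2 ∧ ENNReal.ofReal p.2 < T} :=
    (isOpen_lt continuous_const continuous_snd).inter
      (isOpen_lt (ENNReal.continuous_ofReal.comp continuous_snd) continuous_const)
  refine .of_bddBelow hd₁ ?_ ?_ (fun y t ↦ sq_nonneg _) (fun y ↦ ?_) fun t₁ ht₁ ht₁T ↦ ?_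
  · have hframe : Continuous fun p : ℝ × ℝ ↦ (p.1 + x₀ - c₁ * p.2, p.2) := by fun_prop
    exact hcont.fst.comp hframe.continuousOn fun p hp ↦ hp
  · refine isHeatSupersolutionOn_comovingFrame (wt := ut) (wx := ux) (wxx := uxx) hopen
      (fun x s hs ↦ (hD x s hs.1 hs.2).1) (fun x s hs ↦ (hD x s hs.1 hs.2).2.1)
      (fun x s hs ↦ (hD x s hs.1 hs.2).2.2.1) hD_cont.fst hD_cont.snd.fst
      (fun x s hs ↦ ?_) fun p hp ↦ hp
    obtain ⟨-, -, -, hgx, -, -, -, -, hu_eq, -⟩ := hD x s hs.1 hs.2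
    rw [hu_eq, hgx.unique (hasDerivAt_const _ _), add_zero]
    linarith [hf₁ (u x s, v x s)]
  · rw [comovingFrame, hinit]
    exact hu₀ _
  · obtain ⟨K, hK⟩ := hbdd t₁ ht₁ ht₁T
    refine ⟨K, fun y t ht ↦ (abs_le.1 ?_).1⟩
    exact (le_add_of_nonneg_right (abs_nonneg _)).trans (hK _ t ht.1 ht.2)

section Growth

variable (hd₁ : 0 < d₁) (hd₂ : 0 < d₂) (hf₁ : ∀ p, p.2 ^ 2 ≤ f₁ p) (hf₂ : ∀ p, p.1 ^ 2 ≤ f₂ p)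
  (hu₀ : ∀ x, 0 ≤ u₀ x) (hv₀ : ∀ x, 0 ≤ v₀ x)
  (hsol : IsClassicalSolution d₁ d₂ c₁ c₂ f₁ f₂ (fun _ ↦ 0) (fun _ ↦ 0) T u₀ v₀ u v)
include hd₁ hd₂ hf₁ hf₂ hu₀ hv₀ hsol

theorem isComovingPair (x₀ : ℝ) :
    IsComovingPair d₁ d₂ (c₁ - c₂) T (comovingFrame c₁ x₀ u) (comovingFrame c₂ x₀ v) := by
  constructor
  · convert hsol.isNonnegHeatSupersolution_fst hd₁.le hf₁ hu₀ x₀ using 3 with y t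
    simp only [comovingFrame]
    ring_nf
  · convert hsol.swap.isNonnegHeatSupersolution_fst hd₂.le (fun p ↦ hf₂ p.swap) hv₀ x₀
      using 3 with y t
    simp only [comovingFrame]
    ring_nf

theorem exists_growthAt_snd (hT : 0 < T) {x₀ : ℝ} (hpos : 0 < v₀ x₀) :
    ∃ c > 0, ∀ t, 0 ≤ t → ENNReal.ofReal t < T → GrowthAt c t fun x ↦ v x t := by
  obtain ⟨r, hr, hle⟩ :=
    exists_half_le_comp_add_of_pos (hsol.continuous_snd_zero hT).continuousAt hpos
  obtain ⟨c, hc, hgrowth⟩ := (isComovingPair hd₁ hd₂ hf₁ hf₂ hu₀ hv₀ hsol x₀).exists_growthAt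
    hd₁.le hd₂ (half_pos hpos) hr fun y hy ↦ by
      simpa [comovingFrame, hsol.2.1] using hle y hy
  refine ⟨c, hc, fun t ht htT ↦ GrowthAt.of_comp_add (a := x₀ - c₂ * t) ?_⟩
  simpa only [comovingFrame, add_sub_assoc] using hgrowth t ht htT

theorem exists_growthAt_abs_add_abs (hT : 0 < T) (hnontriv : ¬∀ x, u₀ x = 0 ∧ v₀ x = 0) :
    ∃ c > 0, ∀ t, 0 ≤ t → ENNReal.ofReal t < T → GrowthAt c t fun x ↦ |u x t| + |v x t| := by
  obtain ⟨x₀, hx₀⟩ := not_forall.1 hnontriv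
  rcases (hv₀ x₀).lt_or_eq with hpos | hzero
  · obtain ⟨c, hc, hgrowth⟩ := exists_growthAt_snd hd₁ hd₂ hf₁ hf₂ hu₀ hv₀ hsol hT hpos
    exact ⟨c, hc, fun t ht htT ↦ (hgrowth t ht htT).mono ht le_rfl fun x ↦
      (le_abs_self _).trans (le_add_of_nonneg_left (abs_nonneg _))⟩
  · have hpos : 0 < u₀ x₀ := (hu₀ x₀).lt_of_ne' fun h ↦ hx₀ ⟨h, hzero.symm⟩
    obtain ⟨c, hc, hgrowth⟩ := exists_growthAt_snd hd₂ hd₁ (fun p ↦ hf₂ p.swap)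
      (fun p ↦ hf₁ p.swap) hv₀ hu₀ hsol.swap hT hpos
    exact ⟨c, hc, fun t ht htT ↦ (hgrowth t ht htT).mono ht le_rfl fun x ↦
      (le_abs_self _).trans (le_add_of_nonneg_right (abs_nonneg _))⟩

end Growth

end IsClassicalSolution

theorem growth_quadratic_coupling_general {d₁ d₂ c₁ c₂ : ℝ} (hd₁ : 0 < d₁) (hd₂ : 0 < d₂)
    {f₁ f₂ : ℝ × ℝ → ℝ} (hf₁ : ∀ p, p.2 ^ 2 ≤ f₁ p) (hf₂ : ∀ p, p.1 ^ 2 ≤ f₂ p)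
    {u₀ v₀ : ℝ → ℝ} (hu₀ : ∀ x, 0 ≤ u₀ x) (hv₀ : ∀ x, 0 ≤ v₀ x)
    (hnontriv : ¬∀ x, u₀ x = 0 ∧ v₀ x = 0) {T : ENNReal} (hT : 0 < T) {u v : ℝ → ℝ → ℝ}
    (hsol : IsClassicalSolution d₁ d₂ c₁ c₂ f₁ f₂ (fun _ ↦ 0) (fun _ ↦ 0) T u₀ v₀ u v) :
    ∃ c > 0, ∀ t, 0 ≤ t → ENNReal.ofReal t < T →
      (∀ K, (∀ x, |u x t| + |v x t| ≤ K) → c * log (1 + t) ≤ K) ∧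
        ENNReal.ofReal (c * t) ≤ ∫⁻ x, ENNReal.ofReal (|u x t| + |v x t|) := by
  obtain ⟨c, hc, hgrowth⟩ :=
    hsol.exists_growthAt_abs_add_abs hd₁ hd₂ hf₁ hf₂ hu₀ hv₀ hT hnontriv
  refine ⟨c, hc, fun t ht htT ↦ ?_⟩
  obtain ⟨⟨x, hx⟩, hlintegral⟩ := hgrowth t ht htT
  exact ⟨fun K hK ↦ hx.trans (hK x), hlintegral⟩

end

/-- Theorem 1.5: growth of nontrivial nonnegative solutions to the quadratically
coupled system `u_t = d₁ u_xx + c₁ u_x + v²`, `v_t = d₂ v_xx + c₂ v_x + u²`.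
The supremum lower bound is expressed as: every uniform-in-`x` bound `K` on
`|u| + |v|` at time `t` must satisfy `c log(1+t) ≤ K`; the `L¹` lower bound uses
the Lebesgue integral of the (possibly non-integrable) nonnegative integrand. -/
theorem growth_quadratic_coupling
    (α d₁ d₂ c₁ c₂ : ℝ) (hα : α ∈ Set.Ioo (0 : ℝ) 1)
    (hd₁ : 0 < d₁) (hd₂ : 0 < d₂)
    (u₀ v₀ : ℝ → ℝ)
    (hu₀b : ∃ B : ℝ, ∀ x : ℝ, |u₀ x| ≤ B) (hv₀b : ∃ B : ℝ, ∀ x : ℝ, |v₀ x| ≤ B)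
    (hu₀h : HolderCont α u₀) (hv₀h : HolderCont α v₀)
    (hu₀pos : ∀ x : ℝ, 0 ≤ u₀ x) (hv₀pos : ∀ x : ℝ, 0 ≤ v₀ x)
    (hnontriv : ¬ (∀ x : ℝ, u₀ x = 0 ∧ v₀ x = 0))
    (T : ENNReal) (hT : 0 < T) (u v : ℝ → ℝ → ℝ)
    (hsol : IsClassicalSolution d₁ d₂ c₁ c₂
      (fun p : ℝ × ℝ => p.2 ^ 2) (fun p : ℝ × ℝ => p.1 ^ 2)
      (fun _ : ℝ × ℝ => 0) (fun _ : ℝ × ℝ => 0) T u₀ v₀ u v) :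
    ∃ c : ℝ, 0 < c ∧
      ∀ t : ℝ, 0 ≤ t → ENNReal.ofReal t < T →
        (∀ K : ℝ, (∀ x : ℝ, |u x t| + |v x t| ≤ K) → c * Real.log (1 + t) ≤ K) ∧
        ENNReal.ofReal (c * t) ≤ ∫⁻ x : ℝ, ENNReal.ofReal (|u x t| + |v x t|) :=
  growth_quadratic_coupling_general hd₁ hd₂ (fun _ ↦ le_rfl) (fun _ ↦ le_rfl) hu₀pos hv₀pos
    hnontriv hT hsol
end
end

section
/- Gaussian convolution identity producing exponential temporal decay from a velocity difference. Let d > 0, M > 0, c₁, c₂, x ∈ ℝ and 0 ≤ s < t. Then ∫_ℝ exp( −2(x−y+c₁(t−s))²/(M(t−s)) − (y+c₁s)²/(M(1+s)) − (y+c₂s)²/(M(1+s)) ) / ( √(4πd(t−s)) (1+s) ) dy = √M · exp( −(x+c₁t)²/(M(1+t)) − s²(t−s)(c₁−c₂)²/(2M(1+s)(1+t)) − (x + c₁t + s(c₂−c₁))²/(M(1+t)) ) / ( 2 √( 2d(1+t)(1+s) ) ). -/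
open MeasureTheory

noncomputable section

/-! Two Gaussians in `y` with centres `q₁`, `q₂` and a common width multiply to a single Gaussian
centred at the midpoint of `q₁` and `q₂`, times a constant that records `q₁ - q₂`. Convolving with
the third Gaussian adds the widths, and the result, centred again at the midpoint, splits back
into two Gaussians centred at `q₁` and `q₂`. The two constants are taken at different widths, so
they do not cancel: they leave a factor of Gaussian decay in `q₁ - q₂`, which here is `s` times the
difference of the velocities. -/

section SquareIdentities

variable {K : Type*} [Field K]

theorem sq_sub_div_add_sq_sub_div_eq_midpoint [NeZero (2 : K)] (y q₁ q₂ τ : K) :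
    (y - q₁) ^ 2 / τ + (y - q₂) ^ 2 / τ =
      (y - (q₁ + q₂) / 2) ^ 2 / (τ / 2) + (q₁ - q₂) ^ 2 / (2 * τ) := by
  field_simp
  ring

theorem sq_sub_div_add_sq_sub_div_eq_complete_square {σ τ : K} (hσ : σ ≠ 0) (hτ : τ ≠ 0)
    (hστ : σ + τ ≠ 0) (p q y : K) :
    (p - y) ^ 2 / σ + (y - q) ^ 2 / τ =
      (σ * τ / (σ + τ))⁻¹ * (y - (τ * p + σ * q) / (σ + τ)) ^ 2 + (p - q) ^ 2 / (σ + τ) := by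
  field_simp
  ring

end SquareIdentities

section Integrals

variable {σ τ : ℝ}

theorem integral_exp_neg_mul_sq_sub (b m : ℝ) :
    ∫ y : ℝ, Real.exp (-b * (y - m) ^ 2) = √(Real.pi / b) := by
  rw [integral_sub_right_eq_self (fun y : ℝ ↦ Real.exp (-b * y ^ 2)) m, integral_gaussian]

-- For `σ * τ / (σ + τ) < 0` the integral diverges and both sides take the junk value `0`.
theorem integral_exp_neg_sq_div_sub_sq_div (hσ : σ ≠ 0) (hτ : τ ≠ 0) (hστ : σ + τ ≠ 0)
    (p q : ℝ) :
    ∫ y : ℝ, Real.exp (-((p - y) ^ 2 / σ) - (y - q) ^ 2 / τ) =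
      √(Real.pi * (σ * τ / (σ + τ))) * Real.exp (-((p - q) ^ 2 / (σ + τ))) := by
  have integrand_eq (y : ℝ) : Real.exp (-((p - y) ^ 2 / σ) - (y - q) ^ 2 / τ) =
      Real.exp (-(σ * τ / (σ + τ))⁻¹ * (y - (τ * p + σ * q) / (σ + τ)) ^ 2) *
        Real.exp (-((p - q) ^ 2 / (σ + τ))) := by
    rw [← Real.exp_add]
    congr 1
    linear_combination -sq_sub_div_add_sq_sub_div_eq_complete_square hσ hτ hστ p q y
  simp_rw [integrand_eq]
  rw [integral_mul_const, integral_exp_neg_mul_sq_sub, div_inv_eq_mul]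

theorem integral_exp_neg_two_mul_sq_div_sub_sq_div_sub_sq_div (hσ : σ ≠ 0) (hτ : τ ≠ 0)
    (hστ : σ + τ ≠ 0) (p q₁ q₂ : ℝ) :
    ∫ y : ℝ, Real.exp (-(2 * (p - y) ^ 2) / σ - (y - q₁) ^ 2 / τ - (y - q₂) ^ 2 / τ) =
      √(Real.pi * (σ * τ / (2 * (σ + τ)))) *
        Real.exp (-(p - q₁) ^ 2 / (σ + τ) - σ * (q₁ - q₂) ^ 2 / (2 * τ * (σ + τ)) -
          (p - q₂) ^ 2 / (σ + τ)) := by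
  have integrand_eq (y : ℝ) :
      Real.exp (-(2 * (p - y) ^ 2) / σ - (y - q₁) ^ 2 / τ - (y - q₂) ^ 2 / τ) =
        Real.exp (-((p - y) ^ 2 / (σ / 2)) - (y - (q₁ + q₂) / 2) ^ 2 / (τ / 2)) *
          Real.exp (-((q₁ - q₂) ^ 2 / (2 * τ))) := by
    rw [← Real.exp_add]
    congr 1
    linear_combination -sq_sub_div_add_sq_sub_div_eq_midpoint y q₁ q₂ τ
  have width_add : σ / 2 + τ / 2 = (σ + τ) / 2 := by ring
  have width_harmonic : σ / 2 * (τ / 2) / ((σ + τ) / 2) = σ * τ / (2 * (σ + τ)) := by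
    field_simp
  have offset_sub : (q₁ - q₂) ^ 2 / (2 * τ) - (q₁ - q₂) ^ 2 / (2 * (σ + τ)) =
      σ * (q₁ - q₂) ^ 2 / (2 * τ * (σ + τ)) := by
    field_simp
    ring
  simp_rw [integrand_eq]
  rw [integral_mul_const, integral_exp_neg_sq_div_sub_sq_div (by positivity) (by positivity)
    (by rw [width_add]; positivity), width_add, width_harmonic, mul_assoc, ← Real.exp_add]
  congr 2
  linear_combination sq_sub_div_add_sq_sub_div_eq_midpoint p q₁ q₂ (σ + τ) - offset_sub

end Integrals

theorem sqrt_pi_mul_div_sqrt_four_pi_mul {d M u τ r : ℝ} (hd : 0 < d) (hM : 0 < M) (hu : 0 < u)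
    (hτ : 0 < τ) (hr : 0 < r) :
    √(Real.pi * (M * u * τ / (2 * r))) / (√(4 * Real.pi * d * u) * τ) =
      √M / (2 * √(2 * d * r * τ)) := by
  rw [← sq_eq_sq₀ (by positivity) (by positivity)]
  simp only [div_pow, mul_pow]
  rw [Real.sq_sqrt (by positivity), Real.sq_sqrt (by positivity), Real.sq_sqrt hM.le,
    Real.sq_sqrt (by positivity)]
  field_simp
  norm_num

theorem gaussian_convolution_velocity_difference_general
    (d M c₁ c₂ x s t : ℝ) (hd : 0 < d) (hM : 0 < M) (hs : -1 < s) (hst : s < t) :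
    (∫ y : ℝ,
        Real.exp (-(2 * (x - y + c₁ * (t - s)) ^ 2) / (M * (t - s)) -
            (y + c₁ * s) ^ 2 / (M * (1 + s)) - (y + c₂ * s) ^ 2 / (M * (1 + s))) /
          (Real.sqrt (4 * Real.pi * d * (t - s)) * (1 + s))) =
      Real.sqrt M *
        Real.exp (-(x + c₁ * t) ^ 2 / (M * (1 + t)) -
            s ^ 2 * (t - s) * (c₁ - c₂) ^ 2 / (2 * M * (1 + s) * (1 + t)) -
            (x + c₁ * t + s * (c₂ - c₁)) ^ 2 / (M * (1 + t))) /
        (2 * Real.sqrt (2 * d * (1 + t) * (1 + s))) := by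
  have hu : 0 < t - s := sub_pos.2 hst
  have hτ : 0 < 1 + s := by linarith
  have hr : 0 < 1 + t := by linarith
  have width_add : M * (t - s) + M * (1 + s) = M * (1 + t) := by ring
  have integral_eq := integral_exp_neg_two_mul_sq_div_sub_sq_div_sub_sq_div
    (mul_pos hM hu).ne' (mul_pos hM hτ).ne' (width_add ▸ (mul_pos hM hr).ne')
    (x + c₁ * (t - s)) (-(c₁ * s)) (-(c₂ * s))
  have width_harmonic : M * (t - s) * (M * (1 + s)) / (2 * (M * (1 + t))) =
      M * (t - s) * (1 + s) / (2 * (1 + t)) := by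
    field_simp
  rw [width_add, width_harmonic] at integral_eq
  simp only [sub_neg_eq_add, add_sub_right_comm x] at integral_eq
  rw [integral_div, integral_eq, mul_div_right_comm,
    sqrt_pi_mul_div_sqrt_four_pi_mul hd hM hu hτ hr, ← mul_div_right_comm]
  congr 3
  field_simp
  ring

/-- Gaussian convolution identity producing exponential temporal decay from a
velocity difference (identity (3.9) of the paper). -/
theorem gaussian_convolution_velocity_difference
    (d M c₁ c₂ x s t : ℝ) (hd : 0 < d) (hM : 0 < M) (hs : 0 ≤ s) (hst : s < t) :
    (∫ y : ℝ,
        Real.exp (-(2 * (x - y + c₁ * (t - s)) ^ 2) / (M * (t - s)) -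
            (y + c₁ * s) ^ 2 / (M * (1 + s)) - (y + c₂ * s) ^ 2 / (M * (1 + s))) /
          (Real.sqrt (4 * Real.pi * d * (t - s)) * (1 + s))) =
      Real.sqrt M *
        Real.exp (-(x + c₁ * t) ^ 2 / (M * (1 + t)) -
            s ^ 2 * (t - s) * (c₁ - c₂) ^ 2 / (2 * M * (1 + s) * (1 + t)) -
            (x + c₁ * t + s * (c₂ - c₁)) ^ 2 / (M * (1 + t))) /
        (2 * Real.sqrt (2 * d * (1 + t) * (1 + s))) :=
  gaussian_convolution_velocity_difference_general d M c₁ c₂ x s t hd hM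
    (neg_one_lt_zero.trans_le hs) hst
end
end

section
/- Uniform temporal-decay bound for the velocity-difference exponential. Let M > 0 and c₁, c₂ ∈ ℝ with c₁ ≠ c₂, and let j ∈ {0,1}. Then there exists a constant C > 0 such that for every t ≥ 0: ∫_0^t exp( −s²(t−s)(c₁−c₂)²/(2M(1+s)(1+t)) ) / ( √(1+s) · (t−s)^{j/2} ) ds ≤ C / (1+t)^{j/2}. -/
open MeasureTheory Set

noncomputable section

/-!
Split `[0, t]` into `s` and `r = t - s`. The phase `s² r / ((1 + s) (1 + t))` grows linearly in
`min s r`. Since `1 + t ≤ (1 + s) (1 + r)` and `1 ≤ (1 + t) / r`, every power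
`((1 + t) / r) ^ p` with `p ≤ 1/2` is at most `√(1 + s) √(1 + r⁻¹)`, so after multiplication by
`(1 + t) ^ p` the algebraic weight is at most `√(1 + r⁻¹)`, which is antitone and hence at most
its value at `min s r`. The integrand times `(1 + t) ^ p` is thus dominated by a fixed integrable
function on the half-line evaluated at `min s r`, whatever `t` and `p`.
-/

lemma min_sub_two_le_two_mul_phase {s t : ℝ} (hs : 0 ≤ s) (hst : s ≤ t) :
    min s (t - s) - 2 ≤ 2 * (s ^ 2 * (t - s) / ((1 + s) * (1 + t))) := by
  obtain ⟨r, rfl⟩ : ∃ r, t = s + r := ⟨t - s, by ring⟩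
  have hr : 0 ≤ r := by linarith
  rw [add_sub_cancel_left, ← mul_div_assoc, le_div_iff₀ (by positivity)]
  rcases le_total s r with h | h
  · rw [min_eq_left h]
    nlinarith [mul_nonneg (sq_nonneg s) (sub_nonneg.2 h), mul_nonneg hs hr]
  · rw [min_eq_right h]
    nlinarith [mul_nonneg (mul_nonneg hs hr) (sub_nonneg.2 h), mul_nonneg hr (sub_nonneg.2 h)]

lemma exp_neg_mul_phase_le {a s t : ℝ} (ha : 0 ≤ a) (hs : 0 ≤ s) (hst : s ≤ t) :
    Real.exp (-(a * (s ^ 2 * (t - s) / ((1 + s) * (1 + t))))) ≤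
      Real.exp a * Real.exp (-(a / 2 * min s (t - s))) := by
  rw [← Real.exp_add, Real.exp_le_exp]
  linarith [mul_le_mul_of_nonneg_left (min_sub_two_le_two_mul_phase hs hst) ha]

lemma rpow_one_add_div_sub_le {p s t : ℝ} (hp : p ≤ 1 / 2) (hs : 0 ≤ s) (hst : s < t) :
    ((1 + t) / (t - s)) ^ p ≤ √(1 + s) * √(1 + (t - s)⁻¹) := by
  have hr : 0 < t - s := sub_pos.2 hst
  have one_le_ratio : 1 ≤ (1 + t) / (t - s) := by rw [one_le_div hr]; linarith
  have ratio_le : (1 + t) / (t - s) ≤ (1 + s) * (1 + (t - s)⁻¹) := by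
    rw [div_le_iff₀ hr, mul_assoc, add_mul 1 (t - s)⁻¹, inv_mul_cancel₀ hr.ne']
    linarith [mul_nonneg hs hr.le]
  calc ((1 + t) / (t - s)) ^ p
      ≤ ((1 + t) / (t - s)) ^ (1 / 2 : ℝ) := Real.rpow_le_rpow_of_exponent_le one_le_ratio hp
    _ = √((1 + t) / (t - s)) := (Real.sqrt_eq_rpow _).symm
    _ ≤ √((1 + s) * (1 + (t - s)⁻¹)) := Real.sqrt_le_sqrt ratio_le
    _ = √(1 + s) * √(1 + (t - s)⁻¹) := Real.sqrt_mul (by linarith) _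

/-- The profile on `(0, ∞)` that dominates the rescaled integrand: exponential decay of rate `b`
with an inverse square-root singularity at `0`. The singularity is encoded as `√(1 + r⁻¹)`
rather than as a power of `r` because this is the factor that
`(1 + t) / r ≤ (1 + s) (1 + r⁻¹)` produces for `r = t - s`. -/
def decayProfile (b r : ℝ) : ℝ :=
  √(1 + r⁻¹) * Real.exp (-(b * r))

lemma decayProfile_nonneg (b r : ℝ) : 0 ≤ decayProfile b r := by
  unfold decayProfile
  positivity

lemma integrableOn_decayProfile {b : ℝ} (hb : 0 < b) :
    IntegrableOn (decayProfile b) (Ioi 0) := by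
  have exp_int : IntegrableOn (fun r : ℝ => Real.exp (-b * r)) (Ioi 0) :=
    integrableOn_exp_mul_Ioi (neg_neg_of_pos hb) 0
  have sing_int : IntegrableOn (fun r : ℝ => r ^ (-(1 / 2) : ℝ) * Real.exp (-b * r)) (Ioi 0) := by
    simpa using integrableOn_rpow_mul_exp_neg_mul_rpow (p := 1) (s := -(1 / 2)) (b := b)
      (by norm_num) one_pos hb
  refine (exp_int.add sing_int).mono' (by unfold decayProfile; fun_prop) ?_
  filter_upwards [ae_restrict_mem measurableSet_Ioi] with r hr
  have sqrt_le : √(1 + r⁻¹) ≤ 1 + r ^ (-(1 / 2) : ℝ) := by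
    have hr_inv : 0 ≤ r⁻¹ := inv_nonneg.2 (le_of_lt hr)
    rw [Real.sqrt_eq_rpow, Real.rpow_neg (le_of_lt hr), ← Real.inv_rpow (le_of_lt hr)]
    simpa using Real.rpow_add_le_add_rpow zero_le_one hr_inv (p := 1 / 2)
      (by norm_num) (by norm_num)
  rw [Real.norm_of_nonneg (decayProfile_nonneg b r), Pi.add_apply, ← one_add_mul, neg_mul]
  exact mul_le_mul_of_nonneg_right sqrt_le (Real.exp_pos _).le

lemma integrand_le_decayProfile_add {a p s t : ℝ} (ha : 0 ≤ a) (hp : p ≤ 1 / 2) (hs : 0 < s)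
    (hst : s < t) :
    Real.exp (-(a * (s ^ 2 * (t - s) / ((1 + s) * (1 + t))))) / (√(1 + s) * (t - s) ^ p) ≤
      Real.exp a / (1 + t) ^ p * (decayProfile (a / 2) s + decayProfile (a / 2) (t - s)) := by
  have hr : 0 < t - s := sub_pos.2 hst
  have ht : 0 < 1 + t := by linarith
  have hmin : 0 < min s (t - s) := lt_min hs hr
  have weight_le : (√(1 + s) * (t - s) ^ p)⁻¹ ≤ √(1 + (t - s)⁻¹) / (1 + t) ^ p := by
    have h := rpow_one_add_div_sub_le hp hs.le hst
    rw [Real.div_rpow ht.le hr.le, div_le_iff₀ (by positivity)] at h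
    rw [inv_le_iff_one_le_mul₀ (by positivity), div_mul_eq_mul_div, one_le_div (by positivity)]
    linarith
  have sqrt_le_min : √(1 + (t - s)⁻¹) ≤ √(1 + (min s (t - s))⁻¹) :=
    Real.sqrt_le_sqrt (add_le_add_right (inv_anti₀ hmin (min_le_right _ _)) 1)
  have profile_min_le : decayProfile (a / 2) (min s (t - s)) ≤
      decayProfile (a / 2) s + decayProfile (a / 2) (t - s) := by
    rcases min_choice s (t - s) with h | h <;> rw [h] <;>
      linarith [decayProfile_nonneg (a / 2) s, decayProfile_nonneg (a / 2) (t - s)]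
  calc Real.exp (-(a * (s ^ 2 * (t - s) / ((1 + s) * (1 + t))))) / (√(1 + s) * (t - s) ^ p)
      ≤ Real.exp a * Real.exp (-(a / 2 * min s (t - s))) * (√(1 + (t - s)⁻¹) / (1 + t) ^ p) := by
        rw [div_eq_mul_inv]
        gcongr
        exact exp_neg_mul_phase_le ha hs.le hst.le
    _ ≤ Real.exp a * Real.exp (-(a / 2 * min s (t - s))) *
          (√(1 + (min s (t - s))⁻¹) / (1 + t) ^ p) := by gcongr
    _ = Real.exp a / (1 + t) ^ p * decayProfile (a / 2) (min s (t - s)) := by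
        unfold decayProfile
        ring
    _ ≤ _ := by gcongr

lemma integrableOn_Ioo_comp_sub_left {E : Type*} [NormedAddCommGroup E] {f : ℝ → E} {t : ℝ}
    (hf : IntegrableOn f (Ioo 0 t)) : IntegrableOn (fun s => f (t - s)) (Ioo 0 t) := by
  have h := ((Measure.measurePreserving_sub_left volume t).integrableOn_comp_preimage
    (MeasurableEquiv.subLeft t).measurableEmbedding).2 hf
  simpa [Function.comp_def] using h

lemma setIntegral_Ioo_comp_sub_left {E : Type*} [NormedAddCommGroup E] [NormedSpace ℝ E]
    (f : ℝ → E) (t : ℝ) : ∫ s in Ioo 0 t, f (t - s) = ∫ s in Ioo 0 t, f s := by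
  simpa using (Measure.measurePreserving_sub_left volume t).setIntegral_preimage_emb
    (MeasurableEquiv.subLeft t).measurableEmbedding f (Ioo 0 t)

lemma setIntegral_Ioo_add_comp_sub_le {f : ℝ → ℝ} (hf : IntegrableOn f (Ioi 0))
    (hf_nonneg : ∀ s, 0 < s → 0 ≤ f s) (t : ℝ) :
    ∫ s in Ioo 0 t, (f s + f (t - s)) ≤ 2 * ∫ s in Ioi 0, f s := by
  have hf_Ioo : IntegrableOn f (Ioo 0 t) := hf.mono_set Ioo_subset_Ioi_self
  have le_Ioi : ∫ s in Ioo 0 t, f s ≤ ∫ s in Ioi 0, f s :=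
    setIntegral_mono_set hf (ae_restrict_of_forall_mem measurableSet_Ioi hf_nonneg)
      Ioo_subset_Ioi_self.eventuallyLE
  rw [integral_add hf_Ioo (integrableOn_Ioo_comp_sub_left hf_Ioo),
    setIntegral_Ioo_comp_sub_left]
  linarith

lemma integrableOn_Ioo_and_setIntegral_le_of_le_add_comp_sub {f g : ℝ → ℝ} {t K : ℝ}
    (hg : AEStronglyMeasurable g (volume.restrict (Ioo 0 t)))
    (hf : IntegrableOn f (Ioi 0)) (hf_nonneg : ∀ s, 0 < s → 0 ≤ f s) (hK : 0 ≤ K)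
    (hg_nonneg : ∀ s ∈ Ioo 0 t, 0 ≤ g s)
    (hgf : ∀ s ∈ Ioo 0 t, g s ≤ K * (f s + f (t - s))) :
    IntegrableOn g (Ioo 0 t) ∧ ∫ s in Ioo 0 t, g s ≤ K * (2 * ∫ s in Ioi 0, f s) := by
  have hf_Ioo : IntegrableOn f (Ioo 0 t) := hf.mono_set Ioo_subset_Ioi_self
  have dom_int : IntegrableOn (fun s => K * (f s + f (t - s))) (Ioo 0 t) :=
    (hf_Ioo.add (integrableOn_Ioo_comp_sub_left hf_Ioo)).const_mul K
  have hg_int : IntegrableOn g (Ioo 0 t) := by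
    refine dom_int.mono' hg (ae_restrict_of_forall_mem measurableSet_Ioo fun s hs => ?_)
    rw [Real.norm_of_nonneg (hg_nonneg s hs)]
    exact hgf s hs
  refine ⟨hg_int, ?_⟩
  calc ∫ s in Ioo 0 t, g s
      ≤ ∫ s in Ioo 0 t, K * (f s + f (t - s)) :=
        setIntegral_mono_on hg_int dom_int measurableSet_Ioo hgf
    _ = K * ∫ s in Ioo 0 t, (f s + f (t - s)) := integral_const_mul _ _
    _ ≤ K * (2 * ∫ s in Ioi 0, f s) := by
        gcongr
        exact setIntegral_Ioo_add_comp_sub_le hf hf_nonneg t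

theorem velocity_difference_temporal_decay_general {M c₁ c₂ : ℝ} (hM : 0 < M) (hc : c₁ ≠ c₂) :
    ∃ C : ℝ, 0 < C ∧ ∀ p ≤ (1 / 2 : ℝ), ∀ t : ℝ, 0 ≤ t →
      IntegrableOn (fun s : ℝ =>
          Real.exp (-(s ^ 2 * (t - s) * (c₁ - c₂) ^ 2) / (2 * M * (1 + s) * (1 + t))) /
            (√(1 + s) * (t - s) ^ p)) (Ioo 0 t) ∧
        (∫ s in Ioo (0 : ℝ) t,
          Real.exp (-(s ^ 2 * (t - s) * (c₁ - c₂) ^ 2) / (2 * M * (1 + s) * (1 + t))) /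
            (√(1 + s) * (t - s) ^ p)) ≤ C / (1 + t) ^ p := by
  set a : ℝ := (c₁ - c₂) ^ 2 / (2 * M) with a_def
  have ha : 0 < a := div_pos (sq_pos_of_ne_zero (sub_ne_zero.2 hc)) (by linarith)
  have exponent_eq (s t : ℝ) : -(s ^ 2 * (t - s) * (c₁ - c₂) ^ 2) / (2 * M * (1 + s) * (1 + t)) =
      -(a * (s ^ 2 * (t - s) / ((1 + s) * (1 + t)))) := by
    rw [a_def, div_mul_div_comm, neg_div]
    ring_nf
  have profile_int := integrableOn_decayProfile (half_pos ha)
  have profile_nonneg : 0 ≤ ∫ r in Ioi 0, decayProfile (a / 2) r :=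
    integral_nonneg (decayProfile_nonneg _)
  refine ⟨Real.exp a * (2 * ∫ r in Ioi 0, decayProfile (a / 2) r) + 1, by positivity,
    fun p hp t ht => ?_⟩
  simp only [exponent_eq]
  obtain ⟨integrand_int, integral_le⟩ :=
    integrableOn_Ioo_and_setIntegral_le_of_le_add_comp_sub (t := t)
      (g := fun s => Real.exp (-(a * (s ^ 2 * (t - s) / ((1 + s) * (1 + t))))) /
        (√(1 + s) * (t - s) ^ p)) (K := Real.exp a / (1 + t) ^ p)
      (Measurable.aestronglyMeasurable (by fun_prop)) profile_int
      (fun s _ => decayProfile_nonneg _ s) (by positivity)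
      (fun s hs => by have := sub_pos.2 hs.2; positivity)
      (fun s hs => integrand_le_decayProfile_add ha.le hp hs.1 hs.2)
  refine ⟨integrand_int, integral_le.trans ?_⟩
  rw [div_mul_eq_mul_div]
  gcongr
  linarith

/-- Uniform temporal-decay bound for the velocity-difference exponential
(estimate (4.11) of the paper). -/
theorem velocity_difference_temporal_decay
    (M c₁ c₂ : ℝ) (hM : 0 < M) (hc : c₁ ≠ c₂) (j : ℕ) (hj : j = 0 ∨ j = 1) :
    ∃ C : ℝ, 0 < C ∧ ∀ t : ℝ, 0 ≤ t →
      (∫ s in Set.Ioo (0 : ℝ) t,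
          Real.exp (-(s ^ 2 * (t - s) * (c₁ - c₂) ^ 2) /
              (2 * M * (1 + s) * (1 + t))) /
            (Real.sqrt (1 + s) * (t - s) ^ ((j : ℝ) / 2))) ≤
        C / (1 + t) ^ ((j : ℝ) / 2) := by
  obtain ⟨C, hC, h⟩ := velocity_difference_temporal_decay_general hM hc
  exact ⟨C, hC, fun t ht => (h _ (by rcases hj with rfl | rfl <;> norm_num) t ht).2⟩
end
end

section
/- Bound on the self-interaction convolution integral I_*. Let M > 0 and c ∈ ℝ. Then there exists a constant C > 0 such that for every x ∈ ℝ and every t ≥ 0: ∫_0^t ∫_ℝ exp( −(x−y+c(t−s))²/(M(t−s)) − (y+cs)²/(M(1+s)) ) / (1+s) · ( 1/((1+s)√(t−s)) + 1/(t−s) ) dy ds ≤ C e^{−(x+ct)²/(M(1+t))} / √(1+t). -/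
open MeasureTheory Set

noncomputable section

/-!
Completing the square in `y` (the semigroup property of the heat kernel) evaluates the inner
integral: the variances `M (t - s)` and `M (1 + s)` add up to `M (1 + t)`, so the Gaussian
on the right-hand side factors out and only the weight
`(1 + s) ^ (-3 / 2) + 1 / (√(1 + s) √(t - s))` remains under the `s`-integral. Its first term has
integral `2` over `(0, ∞)`; its second is the arcsine density on `(-1, t)`, of total mass `π`.
-/

section GaussianConvolution

variable {V : Type*} [NormedAddCommGroup V] [InnerProductSpace ℝ V] {a b : ℝ}

lemma norm_sq_div_add_norm_sq_div (ha : 0 < a) (hb : 0 < b) (u v y : V) :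
    ‖u - y‖ ^ 2 / a + ‖y - v‖ ^ 2 / b =
      ‖u - v‖ ^ 2 / (a + b) +
        (a + b) / (a * b) * ‖y - ((b / (a + b)) • u + (a / (a + b)) • v)‖ ^ 2 := by
  have hab : a + b ≠ 0 := (add_pos ha hb).ne'
  set d := u - v with hd
  set p := y - ((b / (a + b)) • u + (a / (a + b)) • v) with hp
  have hu : u - y = (a / (a + b)) • d - p := by
    rw [hd, hp]
    match_scalars <;> field_simp <;> ring
  have hv : y - v = (b / (a + b)) • d + p := by
    rw [hd, hp]
    match_scalars <;> field_simp <;> ring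
  rw [hu, hv, norm_sub_sq_real, norm_add_sq_real]
  simp only [norm_smul, mul_pow, Real.norm_eq_abs, sq_abs, real_inner_smul_left]
  field_simp
  ring

lemma integral_exp_neg_norm_sq_div_sub_norm_sq_div [FiniteDimensional ℝ V] [MeasurableSpace V]
    [BorelSpace V] (ha : 0 < a) (hb : 0 < b) (u v : V) :
    ∫ y : V, Real.exp (-‖u - y‖ ^ 2 / a - ‖y - v‖ ^ 2 / b) =
      (Real.pi * (a * b / (a + b))) ^ (Module.finrank ℝ V / 2 : ℝ) *
        Real.exp (-‖u - v‖ ^ 2 / (a + b)) := by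
  set m := (b / (a + b)) • u + (a / (a + b)) • v
  set k := (a + b) / (a * b) with hk
  have hsplit (y : V) : Real.exp (-‖u - y‖ ^ 2 / a - ‖y - v‖ ^ 2 / b) =
      Real.exp (-k * ‖y - m‖ ^ 2) * Real.exp (-‖u - v‖ ^ 2 / (a + b)) := by
    rw [← Real.exp_add]
    congr 1
    linear_combination -norm_sq_div_add_norm_sq_div ha hb u v y
  simp_rw [hsplit]
  rw [integral_mul_const, integral_sub_right_eq_self (fun y ↦ Real.exp (-k * ‖y‖ ^ 2)),
    GaussianFourier.integral_rexp_neg_mul_sq_norm (by positivity), hk, div_eq_mul_inv, inv_div]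

lemma integral_exp_neg_sq_div_sub_sq_div_s11 (ha : 0 < a) (hb : 0 < b) (u v : ℝ) :
    ∫ y : ℝ, Real.exp (-(u - y) ^ 2 / a - (y - v) ^ 2 / b) =
      √(Real.pi * (a * b / (a + b))) * Real.exp (-(u - v) ^ 2 / (a + b)) := by
  simpa [Real.sqrt_eq_rpow] using integral_exp_neg_norm_sq_div_sub_norm_sq_div ha hb u v

end GaussianConvolution

section ArcsineDensity

variable {a b s : ℝ}

lemma hasDerivAt_arcsin_rescale (hs : s ∈ Ioo a b) :
    HasDerivAt (fun s ↦ Real.arcsin ((2 * s - a - b) / (b - a))) (1 / (√(s - a) * √(b - s))) s := by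
  obtain ⟨has, hsb⟩ := hs
  have hsa : 0 < s - a := sub_pos.2 has
  have hba : 0 < b - a := by linarith
  have hlower : (2 * s - a - b) / (b - a) ≠ -1 := by
    rw [Ne, div_eq_iff hba.ne']
    linarith
  have hupper : (2 * s - a - b) / (b - a) ≠ 1 := by
    rw [Ne, div_eq_iff hba.ne']
    linarith
  have hrescale : HasDerivAt (fun s ↦ (2 * s - a - b) / (b - a)) (2 / (b - a)) s := by
    simpa using ((((hasDerivAt_id s).const_mul 2).sub_const a).sub_const b).div_const (b - a)
  have hsqrt : √(1 - ((2 * s - a - b) / (b - a)) ^ 2) =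
      2 / (b - a) * (√(s - a) * √(b - s)) := by
    rw [← Real.sqrt_mul hsa.le, Real.sqrt_eq_iff_mul_self_eq_of_pos (by positivity),
      mul_mul_mul_comm, Real.mul_self_sqrt (by positivity)]
    field_simp
    ring
  refine ((Real.hasDerivAt_arcsin hlower hupper).comp s hrescale).congr_deriv ?_
  rw [hsqrt]
  field_simp

lemma continuous_arcsin_rescale (a b : ℝ) :
    Continuous fun s ↦ Real.arcsin ((2 * s - a - b) / (b - a)) := by
  fun_prop

lemma integrableOn_Ioo_one_div_sqrt_mul_sqrt (a b : ℝ) :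
    IntegrableOn (fun s ↦ 1 / (√(s - a) * √(b - s))) (Ioo a b) :=
  (intervalIntegral.integrableOn_deriv_of_nonneg (continuous_arcsin_rescale a b).continuousOn
    (fun _ ↦ hasDerivAt_arcsin_rescale) fun _ _ ↦ by positivity).mono_set Ioo_subset_Ioc_self

lemma setIntegral_Ioo_one_div_sqrt_mul_sqrt (hab : a < b) :
    ∫ s in Ioo a b, 1 / (√(s - a) * √(b - s)) = Real.pi := by
  have hba : b - a ≠ 0 := (sub_pos.2 hab).ne'
  have hright : (2 * b - a - b) / (b - a) = 1 := by
    field_simp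
    ring
  have hleft : (2 * a - a - b) / (b - a) = -1 := by
    field_simp
    ring
  rw [← integral_Ioc_eq_integral_Ioo, ← intervalIntegral.integral_of_le hab.le,
    intervalIntegral.integral_eq_sub_of_hasDerivAt_of_le hab.le
      (continuous_arcsin_rescale a b).continuousOn (fun _ ↦ hasDerivAt_arcsin_rescale)
      ((intervalIntegrable_iff_integrableOn_Ioo_of_le hab.le).2
        (integrableOn_Ioo_one_div_sqrt_mul_sqrt a b)),
    hright, hleft, Real.arcsin_one, Real.arcsin_neg_one]
  ring

end ArcsineDensity

lemma integral_Ioi_add_rpow_of_lt {a c m : ℝ} (ha : a < -1) (hc : -m < c) :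
    ∫ x in Ioi c, (x + m) ^ a = -(c + m) ^ (a + 1) / (a + 1) := by
  rw [← integral_Ioi_rpow_of_lt ha (neg_lt_iff_pos_add.1 hc),
    ← (measurePreserving_add_right volume m).setIntegral_preimage_emb
      (measurableEmbedding_addRight m) (· ^ a) (Ioi (c + m)),
    preimage_add_const_Ioi, add_sub_cancel_right]

section SelfInteraction

variable {M s t : ℝ}

lemma integral_exp_self_interaction (hM : 0 < M) (hs : -1 < s) (hst : s < t) (c x : ℝ) :
    ∫ y : ℝ, Real.exp (-(x - y + c * (t - s)) ^ 2 / (M * (t - s)) -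
        (y + c * s) ^ 2 / (M * (1 + s))) =
      √(Real.pi * M) * (√(t - s) * √(1 + s) / √(1 + t)) *
        Real.exp (-(x + c * t) ^ 2 / (M * (1 + t))) := by
  have hts : 0 < t - s := sub_pos.2 hst
  have hs1 : 0 < 1 + s := by linarith
  have ht1 : 0 < 1 + t := by linarith
  have hvar : M * (t - s) + M * (1 + s) = M * (1 + t) := by ring
  convert integral_exp_neg_sq_div_sub_sq_div_s11 (mul_pos hM hts) (mul_pos hM hs1)
    (x + c * (t - s)) (-(c * s)) using 2
  · ext y
    congr 4 <;> ring
  · rw [hvar, ← Real.sqrt_mul hts.le, ← Real.sqrt_div (by positivity),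
      ← Real.sqrt_mul (by positivity)]
    congr 1
    field_simp
  · rw [hvar]
    congr 3
    ring

lemma integral_self_interaction (hM : 0 < M) (hs : -1 < s) (hst : s < t) (c x : ℝ) :
    ∫ y : ℝ, Real.exp (-(x - y + c * (t - s)) ^ 2 / (M * (t - s)) -
        (y + c * s) ^ 2 / (M * (1 + s))) / (1 + s) *
          (1 / ((1 + s) * √(t - s)) + 1 / (t - s)) =
      √(Real.pi * M) * Real.exp (-(x + c * t) ^ 2 / (M * (1 + t))) / √(1 + t) *
        ((s + 1) ^ (-3 / 2 : ℝ) + 1 / (√(s + 1) * √(t - s))) := by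
  have hts : 0 < t - s := sub_pos.2 hst
  have hs1 : 0 < 1 + s := by linarith
  have hrpow : (1 + s) ^ (-3 / 2 : ℝ) = 1 / ((1 + s) * √(1 + s)) := by
    rw [show (-3 / 2 : ℝ) = -(1 + 1 / 2) by norm_num, Real.rpow_neg hs1.le,
      Real.rpow_add hs1, Real.rpow_one, ← Real.sqrt_eq_rpow, one_div]
  have hweight : √(t - s) * √(1 + s) * (1 / ((1 + s) * √(t - s)) + 1 / (t - s)) / (1 + s) =
      1 / ((1 + s) * √(1 + s)) + 1 / (√(1 + s) * √(t - s)) := by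
    field_simp
    linear_combination √(t - s) * (t - s + √(t - s) * (1 + s)) * Real.sq_sqrt hs1.le +
      (1 + s) ^ 2 * Real.sq_sqrt hts.le
  rw [integral_mul_const, integral_div, integral_exp_self_interaction hM hs hst, add_comm s 1,
    hrpow, ← hweight]
  ring

lemma setIntegral_self_interaction_weight_le (ht : -1 < t) :
    ∫ s in Ioo 0 t, ((s + 1) ^ (-3 / 2 : ℝ) + 1 / (√(s + 1) * √(t - s))) ≤ 2 + Real.pi := by
  have hrpow_int : IntegrableOn (fun s : ℝ ↦ (s + 1) ^ (-3 / 2 : ℝ)) (Ioi 0) :=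
    integrableOn_add_rpow_Ioi_of_lt (by norm_num) (by norm_num)
  have harcsine_int : IntegrableOn (fun s ↦ 1 / (√(s + 1) * √(t - s))) (Ioo (-1) t) := by
    simpa only [sub_neg_eq_add] using integrableOn_Ioo_one_div_sqrt_mul_sqrt (-1) t
  have hsubset : Ioo 0 t ⊆ Ioo (-1) t := Ioo_subset_Ioo_left (by norm_num)
  rw [integral_add (hrpow_int.mono_set Ioo_subset_Ioi_self) (harcsine_int.mono_set hsubset)]
  refine add_le_add ?_ ?_
  · calc ∫ s in Ioo 0 t, (s + 1) ^ (-3 / 2 : ℝ)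
      _ ≤ ∫ s in Ioi 0, (s + 1) ^ (-3 / 2 : ℝ) :=
        setIntegral_mono_set hrpow_int
          (ae_restrict_of_forall_mem measurableSet_Ioi fun s (hs : 0 < s) ↦ by positivity)
          Ioo_subset_Ioi_self.eventuallyLE
      _ = 2 := by
        rw [integral_Ioi_add_rpow_of_lt (by norm_num) (by norm_num)]
        norm_num
  · calc ∫ s in Ioo 0 t, 1 / (√(s + 1) * √(t - s))
      _ ≤ ∫ s in Ioo (-1) t, 1 / (√(s + 1) * √(t - s)) :=
        setIntegral_mono_set harcsine_int (ae_of_all _ fun s ↦ by positivity) hsubset.eventuallyLE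
      _ = Real.pi := by
        simpa only [sub_neg_eq_add] using setIntegral_Ioo_one_div_sqrt_mul_sqrt ht

end SelfInteraction

/-- Bound on the self-interaction convolution integral `I_*`
(estimate (4.8) of the paper). -/
theorem bound_self_interaction_integral
    (M c : ℝ) (hM : 0 < M) :
    ∃ C : ℝ, 0 < C ∧ ∀ x t : ℝ, 0 ≤ t →
      (∫ s in Set.Ioo (0 : ℝ) t, ∫ y : ℝ,
          Real.exp (-(x - y + c * (t - s)) ^ 2 / (M * (t - s)) -
              (y + c * s) ^ 2 / (M * (1 + s))) / (1 + s) *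
            (1 / ((1 + s) * Real.sqrt (t - s)) + 1 / (t - s))) ≤
        C * Real.exp (-(x + c * t) ^ 2 / (M * (1 + t))) / Real.sqrt (1 + t) := by
  refine ⟨√(Real.pi * M) * (2 + Real.pi), by positivity, fun x t ht ↦ ?_⟩
  rw [setIntegral_congr_fun measurableSet_Ioo fun s hs ↦
    integral_self_interaction hM (neg_one_lt_zero.trans hs.1) hs.2 c x, integral_const_mul]
  calc
    _ ≤ √(Real.pi * M) * Real.exp (-(x + c * t) ^ 2 / (M * (1 + t))) / √(1 + t) *
        (2 + Real.pi) := by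
      gcongr
      exact setIntegral_self_interaction_weight_le (neg_one_lt_zero.trans_le ht)
    _ = _ := by ring
end
end

section
/- Bound on the algebraically weighted mix-term convolution integral III_j. Let M > 0, c₁, c₂ ∈ ℝ, r ≥ 3 and j ∈ {0,1}. Then there exists a constant C > 0 such that for every x ∈ ℝ and every t ≥ 0: ∫_0^t ∫_ℝ exp( −4(x−y+c₁(t−s))²/(M(t−s)) ) / ( (1 + |y+c₁s| + √s)^r (1 + |y+c₂s| + √s)^r (t−s)^{(1+j)/2} ) dy ds ≤ C [ (1 + |x+c₁t| + √t)^{−r} + e^{−(x+c₁t)²/(M(1+t))}/√(1+t) ]. -/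
open MeasureTheory Set

noncomputable section

/-!
The second weight is at most `(1 + s) ^ (-r / 2)` uniformly in `y`, so it leaves the `y`-integral:
what remains there is the convolution of a Gaussian at time `τ = t - s` with a single weight
`(1 + |u| + √s) ^ (-r)`, `u = y + c₁ s`. With `z = x + c₁ t` the distance from the
characteristic, either `z` is diffusively small, `z² ≤ 1 + t`, and `exp (-z² / (M (1 + t)))` is
bounded below; or `u` is comparable to `z`, and the weight at `u` is at most a multiple of
`(1 + |z| + √t) ^ (-r)`; or `|u|` is much smaller than `|z|`, and half of the Gaussian exponent
already produces `exp (-z² / (M (1 + t)))`.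
The remaining half-exponent Gaussian, integrated against the weight, gives the factor
`√τ / √(1 + t)`, by estimating either factor of the product in `L^∞` and the other in `L¹`.
What is left is the integral of `(t - s) ^ (-j / 2) (1 + s) ^ (-r / 2)` in `s`, which is bounded
in `t` for `0 ≤ j < 2 < r`.
-/

/-- The Gaussian `exp (-x² / a)` of width `a`, not normalised; `a` is proportional to a time. -/
def gaussianProfile (a x : ℝ) : ℝ := Real.exp (-x ^ 2 / a)

/-- The algebraic weight `(1 + |x| + √s) ^ (-r)` at time `s`, where `x` is the distance from a
characteristic. -/
def algebraicWeight (r s x : ℝ) : ℝ := (1 + |x| + √s) ^ (-r)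

/-- The decay profile at time `t` and distance `z` from a characteristic against which the
convolution is measured: an algebraic weight plus a Gaussian diffusing at the heat rate. -/
def diffusiveEnvelope (M r t z : ℝ) : ℝ :=
  algebraicWeight r t z + gaussianProfile (M * (1 + t)) z / √(1 + t)

section Gaussian

variable {a : ℝ}

lemma gaussianProfile_pos (a x : ℝ) : 0 < gaussianProfile a x := Real.exp_pos _

lemma gaussianProfile_le_one (ha : 0 ≤ a) (x : ℝ) : gaussianProfile a x ≤ 1 :=
  Real.exp_le_one_iff.2 (div_nonpos_of_nonpos_of_nonneg (neg_nonpos.2 (sq_nonneg x)) ha)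

lemma gaussianProfile_le_of_width_le {b : ℝ} (ha : 0 < a) (hab : a ≤ b) (x : ℝ) :
    gaussianProfile a x ≤ gaussianProfile b x := by
  simp only [gaussianProfile, neg_div]
  gcongr

lemma gaussianProfile_eq_exp_neg_mul_sq (a : ℝ) :
    gaussianProfile a = fun x ↦ Real.exp (-a⁻¹ * x ^ 2) := by
  ext x
  rw [gaussianProfile, div_eq_mul_inv, neg_mul, neg_mul, mul_comm]

lemma integrable_gaussianProfile_sub_left (ha : 0 < a) (z : ℝ) :
    Integrable fun u ↦ gaussianProfile a (z - u) := by
  refine Integrable.comp_sub_left ?_ z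
  rw [gaussianProfile_eq_exp_neg_mul_sq]
  exact integrable_exp_neg_mul_sq (inv_pos.2 ha)

lemma integral_gaussianProfile_sub_left (a z : ℝ) :
    ∫ u, gaussianProfile a (z - u) = √(Real.pi * a) := by
  rw [integral_sub_left_eq_self (gaussianProfile a), gaussianProfile_eq_exp_neg_mul_sq,
    integral_gaussian, div_inv_eq_mul]

lemma one_le_exp_mul_gaussianProfile {M T z : ℝ} (hM : 0 < M) (hT : 0 < T) (hz : z ^ 2 ≤ T) :
    1 ≤ Real.exp (1 / M) * gaussianProfile (M * T) z := by
  rw [gaussianProfile, ← Real.exp_add, Real.one_le_exp_iff, neg_div, ← sub_eq_add_neg, sub_nonneg,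
    div_le_div_iff₀ (by positivity) hM]
  nlinarith

lemma gaussianProfile_quarter_le_mul {u z : ℝ} (ha : 0 ≤ a) (huz : 4 * |u| ≤ |z|) :
    gaussianProfile (a / 4) (z - u) ≤ gaussianProfile a z * gaussianProfile (a / 2) (z - u) := by
  have hdist : 3 / 4 * |z| ≤ |z - u| := by linarith [abs_sub_abs_le_abs_sub z u]
  have hsq : z ^ 2 ≤ 2 * (z - u) ^ 2 := by
    have : (3 / 4 * |z|) ^ 2 ≤ |z - u| ^ 2 := by gcongr
    rw [mul_pow, sq_abs, sq_abs] at this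
    nlinarith [sq_nonneg z]
  rw [gaussianProfile, gaussianProfile, gaussianProfile, ← Real.exp_add, Real.exp_le_exp]
  calc -(z - u) ^ 2 / (a / 4) = -(2 * (z - u) ^ 2) / a + -(z - u) ^ 2 / (a / 2) := by ring
    _ ≤ -z ^ 2 / a + -(z - u) ^ 2 / (a / 2) := by gcongr

end Gaussian

section Weight

variable {r s : ℝ}

lemma sqrt_add_le_sqrt_mul_one_add_sqrt {a b : ℝ} (ha : 1 ≤ a) (hb : 0 ≤ b) :
    √(a + b) ≤ √a * (1 + √b) := by
  rw [Real.sqrt_le_left (by positivity), mul_pow, Real.sq_sqrt (by positivity)]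
  calc a + b ≤ a * (1 + b) + 2 * a * √b := by nlinarith [Real.sqrt_nonneg b]
    _ = a * (1 + √b) ^ 2 := by linear_combination -a * Real.sq_sqrt hb

lemma sqrt_one_add_le_one_add_abs_add_sqrt (hs : 0 ≤ s) (u : ℝ) : √(1 + s) ≤ 1 + |u| + √s := by
  have := sqrt_add_le_sqrt_mul_one_add_sqrt le_rfl hs
  rw [Real.sqrt_one, one_mul] at this
  linarith [abs_nonneg u]

lemma algebraicWeight_pos (r s u : ℝ) : 0 < algebraicWeight r s u := by
  unfold algebraicWeight
  positivity

lemma measurable_algebraicWeight (r s : ℝ) : Measurable (algebraicWeight r s) := by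
  unfold algebraicWeight
  fun_prop

lemma algebraicWeight_le_rpow_one_add (hr : 0 ≤ r) (hs : 0 ≤ s) (u : ℝ) :
    algebraicWeight r s u ≤ (1 + s) ^ (-(r / 2)) :=
  calc algebraicWeight r s u ≤ √(1 + s) ^ (-r) :=
        Real.rpow_le_rpow_of_nonpos (by positivity) (sqrt_one_add_le_one_add_abs_add_sqrt hs u)
          (by linarith)
    _ = (1 + s) ^ (-(r / 2)) := by
        rw [Real.sqrt_eq_rpow, ← Real.rpow_mul (by positivity)]
        ring_nf

lemma algebraicWeight_le_rpow_one_add_abs_div (hr : 1 ≤ r) (hs : 0 ≤ s) (u : ℝ) :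
    algebraicWeight r s u ≤ (1 + |u|) ^ (-(r - 1)) / √(1 + s) := by
  have hsplit : algebraicWeight r s u =
      (1 + |u| + √s) ^ (-(r - 1)) / (1 + |u| + √s) := by
    rw [algebraicWeight, ← Real.rpow_sub_one (by positivity)]
    ring_nf
  rw [hsplit]
  refine div_le_div₀ (by positivity) ?_ (by positivity) (sqrt_one_add_le_one_add_abs_add_sqrt hs u)
  exact Real.rpow_le_rpow_of_nonpos (by positivity) (by linarith [Real.sqrt_nonneg s])
    (by linarith)

lemma algebraicWeight_le_one_div_sqrt (hr : 1 ≤ r) (hs : 0 ≤ s) (u : ℝ) :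
    algebraicWeight r s u ≤ 1 / √(1 + s) :=
  (algebraicWeight_le_rpow_one_add_abs_div hr hs u).trans <| by
    gcongr
    exact Real.rpow_le_one_of_one_le_of_nonpos (by linarith [abs_nonneg u]) (by linarith)

lemma algebraicWeight_le_of_abs_le {t u z : ℝ} (hr : 0 ≤ r) (huz : |z| ≤ 4 * |u|)
    (htz : t ≤ z ^ 2) : algebraicWeight r s u ≤ 8 ^ r * algebraicWeight r t z := by
  have hsqrt : √t ≤ |z| := Real.sqrt_le_iff.2 ⟨abs_nonneg z, by rwa [sq_abs]⟩
  have hbase : (1 + |z| + √t) / 8 ≤ 1 + |u| + √s := by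
    linarith [abs_nonneg u, Real.sqrt_nonneg s]
  calc algebraicWeight r s u ≤ ((1 + |z| + √t) / 8) ^ (-r) :=
        Real.rpow_le_rpow_of_nonpos (by positivity) hbase (by linarith)
    _ = 8 ^ r * algebraicWeight r t z := by
        rw [algebraicWeight, Real.div_rpow (by positivity) (by norm_num),
          Real.rpow_neg (by norm_num : (0 : ℝ) ≤ 8), div_inv_eq_mul, mul_comm]

end Weight

lemma diffusiveEnvelope_pos {t : ℝ} (ht : 0 ≤ t) (M r z : ℝ) : 0 < diffusiveEnvelope M r t z :=
  add_pos (algebraicWeight_pos r t z) (div_pos (gaussianProfile_pos _ z) (by positivity))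

section Convolution

variable {a M r s τ : ℝ}

lemma integrable_gaussianProfile_mul_algebraicWeight (ha : 0 < a) (hr : 1 ≤ r) (hs : 0 ≤ s)
    (z : ℝ) : Integrable fun u ↦ gaussianProfile a (z - u) * algebraicWeight r s u := by
  refine (integrable_gaussianProfile_sub_left ha z).mul_bdd (c := 1 / √(1 + s))
    (measurable_algebraicWeight r s).aestronglyMeasurable (.of_forall fun u ↦ ?_)
  rw [Real.norm_of_nonneg (algebraicWeight_pos r s u).le]
  exact algebraicWeight_le_one_div_sqrt hr hs u

lemma integral_gaussianProfile_mul_algebraicWeight_le_sqrt_div (ha : 0 < a) (hr : 1 ≤ r)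
    (hs : 0 ≤ s) (z : ℝ) :
    ∫ u, gaussianProfile a (z - u) * algebraicWeight r s u ≤ √(Real.pi * a) / √(1 + s) :=
  calc ∫ u, gaussianProfile a (z - u) * algebraicWeight r s u
      ≤ ∫ u, gaussianProfile a (z - u) * (1 / √(1 + s)) := by
        refine integral_mono (integrable_gaussianProfile_mul_algebraicWeight ha hr hs z)
          ((integrable_gaussianProfile_sub_left ha z).mul_const _) fun u ↦ ?_
        exact mul_le_mul_of_nonneg_left (algebraicWeight_le_one_div_sqrt hr hs u)
          (gaussianProfile_pos _ _).le
    _ = √(Real.pi * a) / √(1 + s) := by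
        rw [integral_mul_const, integral_gaussianProfile_sub_left, mul_one_div]

lemma integrable_one_add_abs_rpow_neg {p : ℝ} (hp : 1 < p) :
    Integrable fun u : ℝ ↦ (1 + |u|) ^ (-p) :=
  integrable_one_add_norm (by simpa using hp)

lemma integral_gaussianProfile_mul_algebraicWeight_le_integral_div (ha : 0 < a) (hr : 2 < r)
    (hs : 0 ≤ s) (z : ℝ) :
    ∫ u, gaussianProfile a (z - u) * algebraicWeight r s u ≤
      (∫ u : ℝ, (1 + |u|) ^ (-(r - 1))) / √(1 + s) :=
  calc ∫ u, gaussianProfile a (z - u) * algebraicWeight r s u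
      ≤ ∫ u, (1 + |u|) ^ (-(r - 1)) / √(1 + s) := by
        refine integral_mono (integrable_gaussianProfile_mul_algebraicWeight ha (by linarith) hs z)
          ((integrable_one_add_abs_rpow_neg (by linarith)).div_const _) fun u ↦ ?_
        exact (mul_le_of_le_one_left (algebraicWeight_pos r s u).le
          (gaussianProfile_le_one ha.le _)).trans
            (algebraicWeight_le_rpow_one_add_abs_div (by linarith) hs u)
    _ = (∫ u : ℝ, (1 + |u|) ^ (-(r - 1))) / √(1 + s) := integral_div _ _

lemma integral_gaussianProfile_mul_algebraicWeight_le (ha : 0 < a) (hr : 2 < r) (hs : 0 ≤ s)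
    (hτ : 0 < τ) (z : ℝ) :
    ∫ u, gaussianProfile (a * τ) (z - u) * algebraicWeight r s u ≤
      (√(Real.pi * a) + ∫ u : ℝ, (1 + |u|) ^ (-(r - 1))) * √τ / √(1 + (s + τ)) := by
  set I := ∫ u, gaussianProfile (a * τ) (z - u) * algebraicWeight r s u
  set J := ∫ u : ℝ, (1 + |u|) ^ (-(r - 1))
  have haτ : 0 < a * τ := mul_pos ha hτ
  have hI : 0 ≤ I := integral_nonneg fun u ↦
    mul_nonneg (gaussianProfile_pos _ _).le (algebraicWeight_pos r s u).le
  have hgauss : I ≤ √(Real.pi * a) * √τ / √(1 + s) := by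
    rw [← Real.sqrt_mul (by positivity), mul_assoc]
    exact integral_gaussianProfile_mul_algebraicWeight_le_sqrt_div haτ (by linarith) hs z
  have hweight : I ≤ J / √(1 + s) :=
    integral_gaussianProfile_mul_algebraicWeight_le_integral_div haτ hr hs z
  rw [le_div_iff₀' (by positivity), ← add_assoc]
  calc √(1 + s + τ) * I ≤ √(1 + s) * (1 + √τ) * I := by
        gcongr
        exact sqrt_add_le_sqrt_mul_one_add_sqrt (by linarith) hτ.le
    _ = √(1 + s) * (I + √τ * I) := by ring
    _ ≤ √(1 + s) * (√(Real.pi * a) * √τ / √(1 + s) + √τ * (J / √(1 + s))) := by gcongr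
    _ = (√(Real.pi * a) + J) * √τ := by field_simp

lemma gaussianProfile_mul_algebraicWeight_le {t : ℝ} (hM : 0 < M) (hr : 0 ≤ r) (hτ : 0 < τ)
    (hτt : τ ≤ t) (u z : ℝ) :
    gaussianProfile (M * τ / 4) (z - u) * algebraicWeight r s u ≤
      8 ^ r * algebraicWeight r t z * gaussianProfile (M * τ / 4) (z - u) +
        Real.exp (1 / M) * gaussianProfile (M * (1 + t)) z *
          (gaussianProfile (M / 2 * τ) (z - u) * algebraicWeight r s u) := by
  rw [div_mul_eq_mul_div M 2 τ]
  set E := gaussianProfile (M * τ / 4) (z - u)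
  set E' := gaussianProfile (M * τ / 2) (z - u)
  set G := gaussianProfile (M * (1 + t)) z
  set w := algebraicWeight r s u
  have hE : 0 < E := gaussianProfile_pos _ _
  have hE' : 0 < E' := gaussianProfile_pos _ _
  have hG : 0 < G := gaussianProfile_pos _ _
  have hw : 0 < w := algebraicWeight_pos r s u
  have hwz : 0 < algebraicWeight r t z := algebraicWeight_pos r t z
  by_cases hcomparable : 1 + t ≤ z ^ 2 ∧ |z| ≤ 4 * |u|
  · refine le_add_of_le_of_nonneg ?_ (by positivity)
    rw [mul_comm E]
    gcongr
    exact algebraicWeight_le_of_abs_le hr hcomparable.2 (by linarith)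
  suffices hEE' : E ≤ Real.exp (1 / M) * G * E' by
    refine le_add_of_nonneg_of_le (by positivity) ?_
    rw [← mul_assoc]
    gcongr
  rcases le_or_gt (z ^ 2) (1 + t) with hnear | hfar
  · calc E ≤ E' := gaussianProfile_le_of_width_le (by positivity) (by gcongr; norm_num) _
      _ ≤ Real.exp (1 / M) * G * E' :=
        le_mul_of_one_le_left hE'.le (one_le_exp_mul_gaussianProfile hM (by linarith) hnear)
  · have huz : 4 * |u| ≤ |z| := (not_le.1 fun h ↦ hcomparable ⟨hfar.le, h⟩).le
    calc E ≤ gaussianProfile (M * τ) z * E' := gaussianProfile_quarter_le_mul (by positivity) huz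
      _ ≤ G * E' := by
        gcongr
        exact gaussianProfile_le_of_width_le (by positivity) (by gcongr; linarith) z
      _ ≤ Real.exp (1 / M) * G * E' := by
        rw [mul_assoc]
        exact le_mul_of_one_le_left (by positivity) (Real.one_le_exp (by positivity))

lemma exists_integral_gaussianProfile_mul_algebraicWeight_le_diffusiveEnvelope (hM : 0 < M)
    (hr : 2 < r) :
    ∃ C, 0 < C ∧ ∀ z s τ : ℝ, 0 ≤ s → 0 < τ →
      ∫ u, gaussianProfile (M * τ / 4) (z - u) * algebraicWeight r s u ≤
        C * diffusiveEnvelope M r (s + τ) z * √τ := by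
  set A := 8 ^ r * √(Real.pi * (M / 4)) with hA
  set B := Real.exp (1 / M) *
    (√(Real.pi * (M / 2)) + ∫ u : ℝ, (1 + |u|) ^ (-(r - 1))) with hB
  have hApos : 0 < A := by positivity
  have hBpos : 0 < B := by
    have : 0 ≤ ∫ u : ℝ, (1 + |u|) ^ (-(r - 1)) := integral_nonneg fun u ↦ by positivity
    positivity
  refine ⟨A + B, by positivity, fun z s τ hs hτ ↦ ?_⟩
  set Z := algebraicWeight r (s + τ) z
  set G := gaussianProfile (M * (1 + (s + τ))) z
  have hZ : 0 < Z := algebraicWeight_pos r _ z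
  have hG : 0 < G := gaussianProfile_pos _ z
  have hE := integrable_gaussianProfile_sub_left (a := M * τ / 4) (by positivity) z
  have hEw {b : ℝ} (hb : 0 < b) :=
    integrable_gaussianProfile_mul_algebraicWeight (r := r) hb (by linarith) hs z
  calc ∫ u, gaussianProfile (M * τ / 4) (z - u) * algebraicWeight r s u
      ≤ ∫ u, (8 ^ r * Z * gaussianProfile (M * τ / 4) (z - u) + Real.exp (1 / M) * G *
          (gaussianProfile (M / 2 * τ) (z - u) * algebraicWeight r s u)) :=
        integral_mono (hEw (by positivity))
          ((hE.const_mul _).add ((hEw (by positivity)).const_mul _)) fun u ↦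
            gaussianProfile_mul_algebraicWeight_le hM (by linarith) hτ (by linarith) u z
    _ = 8 ^ r * Z * √(Real.pi * (M * τ / 4)) + Real.exp (1 / M) * G *
          ∫ u, gaussianProfile (M / 2 * τ) (z - u) * algebraicWeight r s u := by
        rw [integral_add (hE.const_mul _) ((hEw (by positivity)).const_mul _),
          integral_const_mul, integral_const_mul, integral_gaussianProfile_sub_left]
    _ ≤ 8 ^ r * Z * √(Real.pi * (M / 4) * τ) + Real.exp (1 / M) * G *
          ((√(Real.pi * (M / 2)) + ∫ u : ℝ, (1 + |u|) ^ (-(r - 1))) * √τ / √(1 + (s + τ))) := by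
        rw [show Real.pi * (M * τ / 4) = Real.pi * (M / 4) * τ by ring]
        gcongr
        exact integral_gaussianProfile_mul_algebraicWeight_le (by positivity) hr hs hτ z
    _ = (A * Z + B * (G / √(1 + (s + τ)))) * √τ := by
        rw [Real.sqrt_mul (by positivity), hA, hB]
        ring
    _ ≤ ((A + B) * Z + (A + B) * (G / √(1 + (s + τ)))) * √τ := by gcongr <;> linarith
    _ = (A + B) * diffusiveEnvelope M r (s + τ) z * √τ := by rw [diffusiveEnvelope]; ring

end Convolution

section TimeIntegral

variable {α β : ℝ}

/- The singularity at `s = t` and the decay in `s` are separated, so that the integral of the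
right-hand side over `ℝ` does not depend on `t`. -/
lemma rpow_sub_mul_rpow_one_add_le {s t : ℝ} (hα : 0 ≤ α) (hβ : 0 ≤ β) (hs : s ∈ Ioo 0 t) :
    (t - s) ^ (-α) * (1 + s) ^ (-β) ≤
      (1 + |s|) ^ (-β) + (Ioo 0 1).indicator (fun v : ℝ ↦ v ^ (-α)) (t - s) := by
  have hpos : 0 < s := hs.1
  have hτ : 0 < t - s := sub_pos.2 hs.2
  rw [abs_of_pos hpos]
  rcases lt_or_ge (t - s) 1 with hlt | hge
  · have hmem : t - s ∈ Ioo (0 : ℝ) 1 := ⟨hτ, hlt⟩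
    rw [indicator_of_mem hmem]
    refine le_add_of_nonneg_of_le (by positivity) (mul_le_of_le_one_right (by positivity) ?_)
    exact Real.rpow_le_one_of_one_le_of_nonpos (by linarith) (by linarith)
  · rw [indicator_of_notMem fun h ↦ h.2.not_ge hge, add_zero]
    refine mul_le_of_le_one_left (by positivity) ?_
    exact Real.rpow_le_one_of_one_le_of_nonpos hge (by linarith)

lemma integrable_indicator_Ioo_rpow_neg (hα : α < 1) :
    Integrable ((Ioo 0 1).indicator fun v : ℝ ↦ v ^ (-α)) :=
  (integrable_indicator_iff measurableSet_Ioo).2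
    ((intervalIntegral.integrableOn_Ioo_rpow_iff one_pos).2 (by linarith))

lemma exists_setIntegral_le_of_le_rpow_sub_mul_rpow_one_add (hα : 0 ≤ α) (hα' : α < 1)
    (hβ : 1 < β) :
    ∃ K, 0 < K ∧ ∀ {f : ℝ → ℝ} {t B : ℝ}, 0 ≤ B → (∀ s ∈ Ioo 0 t, 0 ≤ f s) →
      (∀ s ∈ Ioo 0 t, f s ≤ B * ((t - s) ^ (-α) * (1 + s) ^ (-β))) →
      ∫ s in Ioo 0 t, f s ≤ K * B := by
  set κ : ℝ → ℝ := (Ioo 0 1).indicator fun v ↦ v ^ (-α)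
  have hκ : ∀ v, 0 ≤ κ v := indicator_nonneg fun v hv ↦ Real.rpow_nonneg hv.1.le _
  have hdecay := integrable_one_add_abs_rpow_neg hβ
  set K := (∫ s : ℝ, (1 + |s|) ^ (-β)) + ∫ v, κ v
  have hK : 0 ≤ K :=
    add_nonneg (integral_nonneg fun s ↦ by positivity) (integral_nonneg hκ)
  refine ⟨K + 1, by positivity, fun {f t B} hB hf hfle ↦ ?_⟩
  have hκt := (integrable_indicator_Ioo_rpow_neg hα').comp_sub_left t
  set g : ℝ → ℝ := fun s ↦ B * ((1 + |s|) ^ (-β) + κ (t - s))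
  have hg : Integrable g := (hdecay.add hκt).const_mul B
  calc ∫ s in Ioo 0 t, f s ≤ ∫ s in Ioo 0 t, g s := by
        refine integral_mono_of_nonneg (ae_restrict_of_forall_mem measurableSet_Ioo hf)
          hg.integrableOn (ae_restrict_of_forall_mem measurableSet_Ioo fun s hs ↦ ?_)
        exact (hfle s hs).trans <| mul_le_mul_of_nonneg_left
          (rpow_sub_mul_rpow_one_add_le hα (by linarith) hs) hB
    _ ≤ ∫ s, g s := setIntegral_le_integral hg <| .of_forall fun s ↦
        mul_nonneg hB (add_nonneg (by positivity) (hκ _))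
    _ = B * K := by
        rw [integral_const_mul, integral_add hdecay hκt, integral_sub_left_eq_self κ]
    _ ≤ (K + 1) * B := by linarith

end TimeIntegral

/-- The integrand of `III_j`, with `τ = t - s` and `j` allowed to be real. -/
def mixTermIntegrand (M c₁ c₂ r j x t s y : ℝ) : ℝ :=
  Real.exp (-(4 * (x - y + c₁ * (t - s)) ^ 2) / (M * (t - s))) /
    ((1 + |y + c₁ * s| + √s) ^ r * (1 + |y + c₂ * s| + √s) ^ r * (t - s) ^ ((1 + j) / 2))

section MixTerm

variable {M c₁ c₂ r j x t s y : ℝ}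

lemma mixTermIntegrand_nonneg (hst : s ≤ t) : 0 ≤ mixTermIntegrand M c₁ c₂ r j x t s y := by
  have : 0 ≤ t - s := sub_nonneg.2 hst
  unfold mixTermIntegrand
  positivity

lemma mixTermIntegrand_eq_gaussianProfile_mul (hst : s ≤ t) :
    mixTermIntegrand M c₁ c₂ r j x t s y =
      gaussianProfile (M * (t - s) / 4) (x + c₁ * t - (y + c₁ * s)) *
        algebraicWeight r s (y + c₁ * s) * algebraicWeight r s (y + c₂ * s) *
          (t - s) ^ (-((1 + j) / 2)) := by
  have hexp : -(4 * (x - y + c₁ * (t - s)) ^ 2) / (M * (t - s)) =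
      -(x + c₁ * t - (y + c₁ * s)) ^ 2 / (M * (t - s) / 4) := by
    rw [div_div_eq_mul_div]
    ring
  rw [mixTermIntegrand, gaussianProfile, algebraicWeight, algebraicWeight, hexp,
    Real.rpow_neg (by positivity), Real.rpow_neg (by positivity),
    Real.rpow_neg (sub_nonneg.2 hst), div_eq_mul_inv, mul_inv, mul_inv]
  ring

lemma exists_integral_mixTermIntegrand_le (hM : 0 < M) (hr : 2 < r) (c₁ c₂ j : ℝ) :
    ∃ C, 0 < C ∧ ∀ x t, ∀ s ∈ Ioo 0 t, ∫ y, mixTermIntegrand M c₁ c₂ r j x t s y ≤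
      C * diffusiveEnvelope M r t (x + c₁ * t) *
        ((t - s) ^ (-(j / 2)) * (1 + s) ^ (-(r / 2))) := by
  obtain ⟨C, hC, hconv⟩ :=
    exists_integral_gaussianProfile_mul_algebraicWeight_le_diffusiveEnvelope hM hr
  refine ⟨C, hC, fun x t s ⟨hs, hst⟩ ↦ ?_⟩
  have hτ : 0 < t - s := sub_pos.2 hst
  set z := x + c₁ * t
  set D := (1 + s) ^ (-(r / 2)) * (t - s) ^ (-((1 + j) / 2))
  have : 0 ≤ D := by positivity
  set F : ℝ → ℝ := fun u ↦ gaussianProfile (M * (t - s) / 4) (z - u) * algebraicWeight r s u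
  have hF : Integrable F :=
    integrable_gaussianProfile_mul_algebraicWeight (by positivity) (by linarith) hs.le z
  have hle : ∀ y, mixTermIntegrand M c₁ c₂ r j x t s y ≤ F (y + c₁ * s) * D := by
    intro y
    rw [mixTermIntegrand_eq_gaussianProfile_mul hst.le, mul_assoc (F _)]
    have hF₀ : 0 ≤ F (y + c₁ * s) :=
      mul_nonneg (gaussianProfile_pos _ _).le (algebraicWeight_pos r s _).le
    exact mul_le_mul_of_nonneg_left (mul_le_mul_of_nonneg_right
      (algebraicWeight_le_rpow_one_add (by linarith) hs.le _) (by positivity)) hF₀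
  have hpow : √(t - s) * (t - s) ^ (-((1 + j) / 2)) = (t - s) ^ (-(j / 2)) := by
    rw [Real.sqrt_eq_rpow, ← Real.rpow_add hτ]
    ring_nf
  calc ∫ y, mixTermIntegrand M c₁ c₂ r j x t s y ≤ ∫ y, F (y + c₁ * s) * D :=
        integral_mono_of_nonneg (.of_forall fun y ↦ mixTermIntegrand_nonneg hst.le)
          ((hF.comp_add_right _).mul_const D) (.of_forall hle)
    _ = (∫ u, F u) * D := by rw [integral_mul_const, integral_add_right_eq_self F]
    _ ≤ C * diffusiveEnvelope M r t z * √(t - s) * D := by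
        gcongr
        simpa only [add_sub_cancel] using hconv z s (t - s) hs.le hτ
    _ = C * diffusiveEnvelope M r t z * ((t - s) ^ (-(j / 2)) * (1 + s) ^ (-(r / 2))) := by
        rw [← hpow]
        ring

end MixTerm

theorem bound_algebraic_mix_term_integral_general
    (M c₁ c₂ r j : ℝ) (hM : 0 < M) (hr : 2 < r) (hj₀ : 0 ≤ j) (hj₂ : j < 2) :
    ∃ C : ℝ, 0 < C ∧ ∀ x t : ℝ, 0 ≤ t →
      (∫ s in Set.Ioo (0 : ℝ) t, ∫ y : ℝ,
          Real.exp (-(4 * (x - y + c₁ * (t - s)) ^ 2) / (M * (t - s))) /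
            ((1 + |y + c₁ * s| + Real.sqrt s) ^ r *
              (1 + |y + c₂ * s| + Real.sqrt s) ^ r *
              (t - s) ^ ((1 + j) / 2))) ≤
        C * ((1 + |x + c₁ * t| + Real.sqrt t) ^ (-r) +
          Real.exp (-(x + c₁ * t) ^ 2 / (M * (1 + t))) / Real.sqrt (1 + t)) := by
  obtain ⟨C, hC, hspace⟩ := exists_integral_mixTermIntegrand_le hM hr c₁ c₂ j
  obtain ⟨K, hK, htime⟩ := exists_setIntegral_le_of_le_rpow_sub_mul_rpow_one_add
    (α := j / 2) (β := r / 2) (by linarith) (by linarith) (by linarith)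
  refine ⟨K * C, mul_pos hK hC, fun x t ht ↦ ?_⟩
  have hR : 0 < diffusiveEnvelope M r t (x + c₁ * t) := diffusiveEnvelope_pos ht M r _
  have hnonneg : ∀ s ∈ Ioo 0 t, 0 ≤ ∫ y, mixTermIntegrand M c₁ c₂ r j x t s y := fun s hs ↦
    integral_nonneg fun y ↦ mixTermIntegrand_nonneg hs.2.le
  exact (htime (by positivity) hnonneg (hspace x t)).trans_eq (mul_assoc K C _).symm

/-- Bound on the algebraically weighted mix-term convolution integral `III_j`
(estimate (4.16) of the paper). -/
theorem bound_algebraic_mix_term_integral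
    (M c₁ c₂ r : ℝ) (hM : 0 < M) (hr : 3 ≤ r) (j : ℕ) (hj : j = 0 ∨ j = 1) :
    ∃ C : ℝ, 0 < C ∧ ∀ x t : ℝ, 0 ≤ t →
      (∫ s in Set.Ioo (0 : ℝ) t, ∫ y : ℝ,
          Real.exp (-(4 * (x - y + c₁ * (t - s)) ^ 2) / (M * (t - s))) /
            ((1 + |y + c₁ * s| + Real.sqrt s) ^ r *
              (1 + |y + c₂ * s| + Real.sqrt s) ^ r *
              (t - s) ^ ((1 + (j : ℝ)) / 2))) ≤
        C * ((1 + |x + c₁ * t| + Real.sqrt t) ^ (-r) +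
          Real.exp (-(x + c₁ * t) ^ 2 / (M * (1 + t))) / Real.sqrt (1 + t)) := by
  exact bound_algebraic_mix_term_integral_general M c₁ c₂ r j hM (by linarith) (by positivity)
    (by rcases hj with rfl | rfl <;> norm_num)
end
end
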